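/- Let γ : [a,b] → ℝ³ be a minimal inspection curve parametrized with constant speed. Then for almost every t ∈ [a,b], the vectors γ(t) and γ′(t) are linearly independent (equivalently, |γ(t)|²·|γ′(t)|² − ⟨γ(t),γ′(t)⟩² > 0); consequently the spherical arclength function θ(t) := L((γ/|γ|)|[a,t]) is strictly increasing on [a,b], and the unfolding γ̃(t) = |γ(t)|(cos θ(t), sin θ(t)) is locally one-to-one. -/

import Mathlib

open MeasureTheory Set Real
open scoped ENNReal NNReal RealInnerProductSpace

noncomputable section

abbrev E3 := EuclideanSpace ℝ (Fin 3)
abbrev E2 := EuclideanSpace ℝ (Fin 2)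

/-- A closed rectifiable curve on `[a,b]` whose convex hull contains the unit sphere. -/
def IsInspection (a b : ℝ) (γ : ℝ → E3) : Prop :=
  a < b ∧ ContinuousOn γ (Set.Icc a b) ∧ γ a = γ b ∧ eVariationOn γ (Set.Icc a b) ≠ ⊤ ∧
    Metric.sphere (0 : E3) 1 ⊆ convexHull ℝ (γ '' Set.Icc a b)

/-- A minimal inspection curve: an inspection curve of least length. -/
def IsMinimalInspection (a b : ℝ) (γ : ℝ → E3) : Prop :=
  IsInspection a b γ ∧
    ∀ (c d : ℝ) (β : ℝ → E3), IsInspection c d β →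
      eVariationOn γ (Set.Icc a b) ≤ eVariationOn β (Set.Icc c d)

/-- The arclength of the radial (spherical) projection `γ/|γ|` over `[a,t]`. -/
def sphericalArc (a : ℝ) (γ : ℝ → E3) (t : ℝ) : ℝ :=
  (eVariationOn (fun s => ‖γ s‖⁻¹ • γ s) (Set.Icc a t)).toReal

/-- The (cone) unfolding of a space curve: the planar curve with the same height and
the spherical arclength as polar angle. -/
def unfolding (a : ℝ) (γ : ℝ → E3) (t : ℝ) : E2 :=
  ‖γ t‖ • (WithLp.equiv 2 (Fin 2 → ℝ)).symm
    ![Real.cos (sphericalArc a γ t), Real.sin (sphericalArc a γ t)]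

/-
After scaling, a minimal inspection curve becomes a closed unit-speed loop `Γ` which is shortest
among the closed curves whose hull contains the ball of radius `σ = R ^ 2`, slightly larger than
`1`. Call `t` extremal if some unit normal `n` attains the maximum of `⟪n, Γ ·⟫` at `t`.
At such times `Γ` stays outside the unit ball and its velocity is orthogonal to `n`, whence
`⟪Γ, Γ'⟫ ^ 2 ≤ ‖Γ‖ ^ 2 - 1`. Between extremal times `Γ` may be shortcut, so it runs along straight
chords, and `Γ` and `Γ'` can be dependent only on a chord through the origin.

Such a chord is excluded by a calibration. If `Γ` passes through the origin, it crosses every plane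
`⟪x, ·⟫ = c` with `0 < c < σ` and `1 ≤ ‖x‖` at least twice; and expanding the loop along a radial
field does not destroy the hull condition, so the first variation of length is nonnegative. The
`defect` `107 / 50 - crossings - first variation` is nonnegative at almost every extremal time, has
nonnegative integral over every chord, and integral at least `19 / 10` over a chord through the
origin. So `8 * π + 19 / 10 ≤ 107 / 50 * L`, which contradicts the bound `L ≤ 4 * π * σ` given by
the baseball seam.

Finally, if the spherical arclength were constant on an interval, `Γ` would be radial there; and two
points whose polar angles differ by less than `2 * π` have the same unfolding only if the angles
agree.
-/

section ConvexHull

variable {V : Type*} [NormedAddCommGroup V]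

lemma isCompact_convexHull [NormedSpace ℝ V] [FiniteDimensional ℝ V] {S : Set V}
    (hS : IsCompact S) : IsCompact (convexHull ℝ S) := by
  let combos (n : ℕ) : Set V := (fun p : (Fin n → ℝ) × (Fin n → V) => ∑ i, p.1 i • p.2 i) ''
    (stdSimplex ℝ (Fin n) ×ˢ univ.pi fun _ => S)
  have isCompact_combos (n : ℕ) : IsCompact (combos n) :=
    ((isCompact_stdSimplex ℝ _).prod (isCompact_univ_pi fun _ => hS)).image (by fun_prop)
  suffices convexHull ℝ S = ⋃ n ∈ Iic (Module.finrank ℝ V + 1), combos n by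
    rw [this]
    exact (finite_Iic _).isCompact_biUnion fun n _ => isCompact_combos n
  refine Subset.antisymm (fun x hx => ?_) (iUnion₂_subset ?_)
  · obtain ⟨ι, _, z, w, hz, hindep, hw, hw1, rfl⟩ := eq_pos_convex_span_of_mem_convexHull hx
    have hcard : Fintype.card ι ≤ Module.finrank ℝ V + 1 := hindep.card_le_finrank_succ.trans
      (Nat.add_le_add_right (Submodule.finrank_le _) 1)
    refine mem_iUnion₂.2 ⟨_, hcard, (w ∘ (Fintype.equivFin ι).symm, z ∘ (Fintype.equivFin ι).symm),
      ⟨⟨fun i => (hw _).le, ?_⟩, fun i _ => hz ⟨_, rfl⟩⟩, ?_⟩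
    · simpa only [Function.comp_apply, Equiv.sum_comp] using hw1
    · exact (Fintype.equivFin ι).symm.sum_comp fun i => w i • z i
  · rintro n - _ ⟨⟨w, z⟩, ⟨hw, hz⟩, rfl⟩
    exact (convex_convexHull ℝ S).sum_mem (fun i _ => hw.1 i) hw.2
      fun i _ => subset_convexHull ℝ S (hz i trivial)

variable [InnerProductSpace ℝ V] {S : Set V} {σ : ℝ}

lemma closedBall_subset_convexHull [FiniteDimensional ℝ V] (hS : IsCompact S)
    (h : ∀ n : V, ∃ s ∈ S, σ * ‖n‖ ≤ ⟪n, s⟫) : Metric.closedBall 0 σ ⊆ convexHull ℝ S := by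
  intro x hx
  by_contra hxS
  obtain ⟨f, u, hfS, hfx⟩ := geometric_hahn_banach_closed_point (convex_convexHull ℝ S)
    (isCompact_convexHull hS).isClosed hxS
  obtain ⟨n, rfl⟩ := (InnerProductSpace.toDual ℝ V).surjective f
  obtain ⟨s, hs, hns⟩ := h n
  have hsu : ⟪n, s⟫ < u := hfS s (subset_convexHull ℝ S hs)
  have hxσ : ⟪n, x⟫ ≤ ‖n‖ * σ := (real_inner_le_norm n x).trans
    (mul_le_mul_of_nonneg_left (mem_closedBall_zero_iff.1 hx) (norm_nonneg n))
  rw [InnerProductSpace.toDual_apply_apply] at hfx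
  linarith

lemma exists_le_inner_of_sphere_subset_convexHull (hS : IsCompact S) (hne : S.Nonempty)
    (hσ : 0 ≤ σ) (h : Metric.sphere 0 σ ⊆ convexHull ℝ S) (n : V) :
    ∃ s ∈ S, σ * ‖n‖ ≤ ⟪n, s⟫ := by
  obtain ⟨s, hs, hmax⟩ := hS.exists_isMaxOn hne (f := fun x : V => ⟪n, x⟫) (by fun_prop)
  refine ⟨s, hs, ?_⟩
  rcases eq_or_ne n 0 with rfl | hn
  · simp
  have hhull : convexHull ℝ S ⊆ {x : V | ⟪n, x⟫ ≤ ⟪n, s⟫} :=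
    convexHull_min hmax (convex_halfSpace_le (innerₗ V n).isLinear _)
  have hsphere : (σ / ‖n‖) • n ∈ Metric.sphere (0 : V) σ := by
    simp [norm_smul, abs_of_nonneg hσ, hn]
  calc σ * ‖n‖ = ⟪n, (σ / ‖n‖) • n⟫ := by
        rw [inner_smul_right, real_inner_self_eq_norm_sq]
        field_simp
    _ ≤ ⟪n, s⟫ := hhull (h hsphere)

end ConvexHull

section LipschitzCurve

variable {F : Type*} [NormedAddCommGroup F] [NormedSpace ℝ F] {f : ℝ → F} {K : ℝ≥0}

lemma intervalIntegral_deriv_of_lipschitz {f : ℝ → ℝ} (hf : LipschitzWith K f) (a b : ℝ) :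
    ∫ t in a..b, deriv f t = f b - f a :=
  hf.lipschitzOnWith.absolutelyContinuousOnInterval.integral_deriv_eq_sub

lemma intervalIntegrable_of_forall_abs_le {g : ℝ → ℝ} {M : ℝ} (hg : Measurable g)
    (hM : ∀ t, |g t| ≤ M) (a b : ℝ) : IntervalIntegrable g volume a b :=
  intervalIntegrable_iff.2 <| Measure.integrableOn_of_bounded (by simp) hg.aestronglyMeasurable
    (.of_forall hM)

lemma intervalIntegrable_norm_deriv [CompleteSpace F] (hf : LipschitzWith K f) (a b : ℝ) :
    IntervalIntegrable (fun t => ‖deriv f t‖) volume a b := by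
  borelize F
  exact intervalIntegrable_of_forall_abs_le (measurable_deriv f).norm
    (fun t => (abs_norm _).trans_le (norm_deriv_le_of_lipschitz hf)) a b

variable [FiniteDimensional ℝ F]

lemma norm_sub_le_integral_norm_deriv (hf : LipschitzWith K f) {s t : ℝ} (hst : s ≤ t) :
    ‖f t - f s‖ ≤ ∫ x in s..t, ‖deriv f x‖ := by
  have := FiniteDimensional.complete ℝ F
  obtain ⟨φ, hφ, hφst⟩ := exists_dual_vector'' ℝ (f t - f s)
  have hφf : LipschitzWith (‖φ‖₊ * K) (φ ∘ f) := φ.lipschitz.comp hf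
  calc ‖f t - f s‖ = ∫ x in s..t, deriv (φ ∘ f) x := by
        rw [intervalIntegral_deriv_of_lipschitz hφf, Function.comp_apply, Function.comp_apply,
          ← map_sub, hφst]
        rfl
    _ ≤ ∫ x in s..t, ‖deriv f x‖ := by
        refine intervalIntegral.integral_mono_ae hst ?_ (intervalIntegrable_norm_deriv hf s t) ?_
        · exact intervalIntegrable_of_forall_abs_le (measurable_deriv _)
            (fun x => norm_deriv_le_of_lipschitz hφf) s t
        · filter_upwards [hf.ae_differentiableAt_real] with x hx
          rw [(φ.hasFDerivAt.comp_hasDerivAt x hx.hasDerivAt).deriv]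
          exact (le_abs_self _).trans (φ.le_of_opNorm_le hφ _ |>.trans_eq (one_mul _))

lemma eVariationOn_le_of_edist_le {α E G : Type*} [LinearOrder α] [PseudoEMetricSpace E]
    [PseudoEMetricSpace G] {f : α → E} {g : α → G} {s : Set α}
    (h : ∀ x ∈ s, ∀ y ∈ s, x ≤ y → edist (f y) (f x) ≤ edist (g y) (g x)) :
    eVariationOn f s ≤ eVariationOn g s := by
  refine iSup_le ?_
  rintro ⟨n, u, hu, hus⟩
  exact (Finset.sum_le_sum fun i _ => h _ (hus i) _ (hus (i + 1)) (hu i.le_succ)).trans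
    (eVariationOn.sum_le hu hus)

lemma eVariationOn_Icc_le_integral_norm_deriv (hf : LipschitzWith K f) (c d : ℝ) :
    eVariationOn f (Icc c d) ≤ ENNReal.ofReal (∫ x in c..d, ‖deriv f x‖) := by
  have := FiniteDimensional.complete ℝ F
  set arc : ℝ → ℝ := fun t => ∫ x in c..t, ‖deriv f x‖
  have arc_sub (s t : ℝ) : arc t - arc s = ∫ x in s..t, ‖deriv f x‖ :=
    intervalIntegral.integral_interval_sub_left (intervalIntegrable_norm_deriv hf _ _)
      (intervalIntegrable_norm_deriv hf _ _)
  have arc_mono : Monotone arc := fun s t hst => sub_nonneg.1 <| by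
    rw [arc_sub]
    exact intervalIntegral.integral_nonneg hst fun _ _ => norm_nonneg _
  calc eVariationOn f (Icc c d) ≤ eVariationOn arc (Icc c d) := by
        refine eVariationOn_le_of_edist_le fun x _ y _ hxy => ?_
        rw [edist_eq_enorm_sub, edist_eq_enorm_sub, ← ofReal_norm, ← ofReal_norm, arc_sub]
        exact ENNReal.ofReal_le_ofReal
          ((norm_sub_le_integral_norm_deriv hf hxy).trans (le_abs_self _))
    _ ≤ ENNReal.ofReal (arc d - arc c) := by
        simpa using ((arc_mono.monotoneOn univ).eVariationOn_eq (mem_univ c) (mem_univ d)).le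
    _ = _ := by rw [arc_sub]

lemma eVariationOn_Icc_le_of_lipschitzOnWith {E : Type*} [PseudoEMetricSpace E] {f : ℝ → E}
    {x y : ℝ} (hf : LipschitzOnWith K f (Icc x y)) :
    eVariationOn f (Icc x y) ≤ K * ENNReal.ofReal (y - x) := by
  simpa using hf.comp_eVariationOn_le (g := id) (mapsTo_id (Icc x y))

end LipschitzCurve

lemma norm_sub_inner_smul_sq {V : Type*} [NormedAddCommGroup V] [InnerProductSpace ℝ V] {u e : V}
    (he : ‖e‖ = 1) : ‖u - ⟪u, e⟫ • e‖ ^ 2 = ‖u‖ ^ 2 - ⟪u, e⟫ ^ 2 := by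
  rw [norm_sub_sq_real, inner_smul_right, norm_smul, he, mul_one, norm_eq_abs, sq_abs]
  ring

section Gap

/-- `(x, y)` is a gap of `E`: a bounded component of the complement of a closed set `E`. -/
structure IsGap (E : Set ℝ) (x y : ℝ) : Prop where
  lt : x < y
  left_mem : x ∈ E
  right_mem : y ∈ E
  disjoint : Disjoint (Ioo x y) E

variable {E : Set ℝ}

lemma exists_isGap (hE : IsClosed E) {a b t : ℝ} (ha : a ∈ E) (hb : b ∈ E) (ht : t ∈ Icc a b)
    (htE : t ∉ E) : ∃ x y, IsGap E x y ∧ t ∈ Ioo x y ∧ a ≤ x ∧ y ≤ b := by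
  have hbelow : BddAbove (E ∩ Iic t) := ⟨t, fun s hs => hs.2⟩
  have habove : BddBelow (E ∩ Ici t) := ⟨t, fun s hs => hs.2⟩
  have hx := (hE.inter isClosed_Iic).csSup_mem ⟨a, ha, ht.1⟩ hbelow
  have hy := (hE.inter isClosed_Ici).csInf_mem ⟨b, hb, ht.2⟩ habove
  have hxt : sSup (E ∩ Iic t) < t := lt_of_le_of_ne hx.2 fun h => htE (h ▸ hx.1)
  have hty : t < sInf (E ∩ Ici t) := lt_of_le_of_ne hy.2 fun h => htE (h ▸ hy.1)
  refine ⟨_, _, ⟨hxt.trans hty, hx.1, hy.1, disjoint_left.2 fun s hs hsE => ?_⟩, ⟨hxt, hty⟩,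
    le_csSup hbelow ⟨ha, ht.1⟩, csInf_le habove ⟨hb, ht.2⟩⟩
  rcases le_total s t with h | h
  · exact (le_csSup hbelow ⟨hsE, h⟩).not_gt hs.1
  · exact (csInf_le habove ⟨hsE, h⟩).not_gt hs.2

lemma IsGap.eq_of_mem {x y x' y' t : ℝ} (h : IsGap E x y) (h' : IsGap E x' y')
    (ht : t ∈ Ioo x y) (ht' : t ∈ Ioo x' y') : (x, y) = (x', y') := by
  have left_le {u v u' v' : ℝ} (hv : IsGap E u v) (hv' : IsGap E u' v') (hut : t ∈ Ioo u v)
      (hut' : t ∈ Ioo u' v') : u' ≤ u ∧ v ≤ v' :=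
    ⟨le_of_not_gt fun hlt => disjoint_left.1 hv.disjoint ⟨hlt, hut'.1.trans hut.2⟩ hv'.left_mem,
      le_of_not_gt fun hlt => disjoint_left.1 hv.disjoint ⟨hut.1.trans hut'.2, hlt⟩ hv'.right_mem⟩
  have hle := left_le h h' ht ht'
  have hge := left_le h' h ht' ht
  exact Prod.ext (hge.1.antisymm hle.1) (hle.2.antisymm hge.2)

lemma intervalIntegral_gap_le (hE : IsClosed E) {f : ℝ → ℝ} {a b x y : ℝ} (ha : a ∈ E) (hb : b ∈ E)
    (hf : IntegrableOn f (Ioc a b)) (hfE : ∀ᵐ t ∂volume.restrict (Ioc a b), t ∈ E → 0 ≤ f t)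
    (hfgap : ∀ x y, IsGap E x y → 0 ≤ ∫ t in x..y, f t) (hxy : IsGap E x y) (hax : a ≤ x)
    (hyb : y ≤ b) : ∫ t in x..y, f t ≤ ∫ t in a..b, f t := by
  let ι := {p : ℝ × ℝ // IsGap E p.1 p.2 ∧ a ≤ p.1 ∧ p.2 ≤ b}
  set U : Set ℝ := ⋃ p : ι, Ioo p.1.1 p.1.2
  have hdisj : Pairwise (Function.onFun Disjoint fun p : ι => Ioo p.1.1 p.1.2) :=
    fun p q hpq => disjoint_left.2 fun t htp htq =>
      hpq (Subtype.ext (p.2.1.eq_of_mem q.2.1 htp htq))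
  have : Countable ι := hdisj.countable_of_isOpen_disjoint (fun _ => isOpen_Ioo)
    fun p => nonempty_Ioo.2 p.2.1.lt
  have hU : U ⊆ Ioc a b := iUnion_subset fun p t ht =>
    ⟨p.2.2.1.trans_lt ht.1, ht.2.le.trans p.2.2.2⟩
  have hUmeas : MeasurableSet U := .iUnion fun _ => measurableSet_Ioo
  have integral_gap {x y : ℝ} (h : IsGap E x y) : ∫ t in Ioo x y, f t = ∫ t in x..y, f t := by
    rw [intervalIntegral.integral_of_le h.lt.le, integral_Ioc_eq_integral_Ioo]
  have hgaps : ∫ t in x..y, f t ≤ ∫ t in U, f t := by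
    have hsum := hasSum_integral_iUnion (fun p : ι => measurableSet_Ioo (a := p.1.1) (b := p.1.2))
      hdisj (hf.mono_set hU)
    rw [← integral_gap hxy]
    exact le_hasSum hsum ⟨(x, y), hxy, hax, hyb⟩ fun p _ =>
      (hfgap _ _ p.2.1).trans_eq (integral_gap p.2.1).symm
  have hrest : 0 ≤ ∫ t in Ioc a b \ U, f t := by
    refine integral_nonneg_of_ae ?_
    filter_upwards [ae_restrict_of_ae_restrict_of_subset sdiff_subset hfE,
      ae_restrict_mem (measurableSet_Ioc.diff hUmeas)] with t ht htU
    refine ht (by_contra fun htE => ?_)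
    obtain ⟨u, v, huv, htuv, hau, hvb⟩ := exists_isGap hE ha hb (Ioc_subset_Icc_self htU.1) htE
    exact htU.2 (mem_iUnion.2 ⟨⟨(u, v), huv, hau, hvb⟩, htuv⟩)
  have hsplit := setIntegral_union disjoint_sdiff_self_right (measurableSet_Ioc.diff hUmeas)
    (hf.mono_set hU) (hf.mono_set sdiff_subset)
  rw [union_sdiff_cancel hU] at hsplit
  rw [intervalIntegral.integral_of_le (hax.trans (hxy.lt.le.trans hyb)), hsplit]
  linarith

end Gap

section ShortestLoop

variable {V : Type*} [NormedAddCommGroup V] [InnerProductSpace ℝ V]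

/-- A unit-speed `L`-periodic curve whose convex hull contains the ball of radius `σ`, this being
expressed by its support function, and which is shortest among closed curves with that property. -/
structure IsShortestLoop (Γ : ℝ → V) (L σ : ℝ) : Prop where
  lipschitz : LipschitzWith 1 Γ
  periodic : Function.Periodic Γ L
  period_pos : 0 < L
  one_le : 1 ≤ σ
  exists_le_inner : ∀ n : V, ∃ s, σ * ‖n‖ ≤ ⟪n, Γ s⟫
  le_eVariationOn : ∀ (c d : ℝ) (β : ℝ → V), c < d → ContinuousOn β (Icc c d) → β c = β d →
    (∀ n : V, ∃ s ∈ Icc c d, σ * ‖n‖ ≤ ⟪n, β s⟫) → ENNReal.ofReal L ≤ eVariationOn β (Icc c d)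

/-- The times at which a curve touches one of its supporting hyperplanes. -/
def extremalTimes (Γ : ℝ → V) : Set ℝ := {t | ∃ n : V, ‖n‖ = 1 ∧ ∀ s, ⟪n, Γ s⟫ ≤ ⟪n, Γ t⟫}

/-- `Γ` is a unit-speed segment with direction `T` on `[x, y]`, between extremal times `x < y`. -/
structure IsChord (Γ : ℝ → V) (x y : ℝ) (T : V) : Prop where
  lt : x < y
  left_mem : x ∈ extremalTimes Γ
  right_mem : y ∈ extremalTimes Γ
  norm_eq_one : ‖T‖ = 1
  eq_add_smul : ∀ t ∈ Icc x y, Γ t = Γ x + (t - x) • T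

lemma isClosed_extremalTimes [FiniteDimensional ℝ V] {Γ : ℝ → V} (hΓ : Continuous Γ) :
    IsClosed (extremalTimes Γ) := by
  have : CompactSpace (Metric.sphere (0 : V) 1) :=
    isCompact_iff_compactSpace.1 (isCompact_sphere _ _)
  have hclosed : IsClosed {z : ℝ × Metric.sphere (0 : V) 1 |
      ∀ s, ⟪(z.2 : V), Γ s⟫ ≤ ⟪(z.2 : V), Γ z.1⟫} := by
    simp only [ofPred_forall]
    exact isClosed_iInter fun s => isClosed_le (by fun_prop) (by fun_prop)
  convert isClosedMap_fst_of_compactSpace _ hclosed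
  ext t
  simp [extremalTimes]

lemma hasDerivAt_const_inner {Γ : ℝ → V} {v : V} {t : ℝ} (h : HasDerivAt Γ v t) (u : V) :
    HasDerivAt (fun t => ⟪u, Γ t⟫) ⟪u, v⟫ t := by
  simpa using (hasDerivAt_const t u).inner ℝ h

lemma exists_unit_direction_of_length_le_dist {Γ : ℝ → V} (hΓ : LipschitzWith 1 Γ) {x y : ℝ}
    (hxy : x < y) (hle : y - x ≤ ‖Γ y - Γ x‖) :
    ∃ T : V, ‖T‖ = 1 ∧ ∀ t ∈ Icc x y, Γ t = Γ x + (t - x) • T := by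
  have hlip {s t : ℝ} (hst : s ≤ t) : dist (Γ s) (Γ t) ≤ t - s := by
    simpa [Real.dist_eq, abs_sub_comm s t, abs_of_nonneg (sub_nonneg.2 hst)]
      using hΓ.dist_le_mul s t
  have hpos : 0 < y - x := sub_pos.2 hxy
  rw [← dist_eq_norm, dist_comm] at hle
  have hdist : dist (Γ x) (Γ y) = y - x := (hlip hxy.le).antisymm hle
  refine ⟨(y - x)⁻¹ • (Γ y - Γ x), ?_, fun t ht => ?_⟩
  · rw [norm_smul, ← dist_eq_norm, dist_comm, hdist, norm_inv, norm_of_nonneg hpos.le,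
      inv_mul_cancel₀ hpos.ne']
  · have htri := dist_triangle (Γ x) (Γ t) (Γ y)
    have hxt : dist (Γ x) (Γ t) = t - x := by linarith [hlip ht.1, hlip ht.2]
    have hty : dist (Γ t) (Γ y) = y - t := by linarith [hlip ht.1, hlip ht.2]
    rw [eq_lineMap_of_dist_eq_mul_of_dist_eq_mul (x := Γ x) (y := Γ t) (z := Γ y)
      (r := (t - x) / (y - x)) (by rw [hxt, hdist]; field_simp)
      (by rw [hty, hdist]; field_simp; ring), AffineMap.lineMap_apply]
    simp [smul_smul, div_eq_mul_inv, add_comm]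

namespace IsShortestLoop

variable {Γ : ℝ → V} {L σ : ℝ} (hΓ : IsShortestLoop Γ L σ)
include hΓ

lemma continuous : Continuous Γ := hΓ.lipschitz.continuous

lemma norm_deriv_le_one (t : ℝ) : ‖deriv Γ t‖ ≤ 1 := by
  simpa using norm_deriv_le_of_lipschitz hΓ.lipschitz

lemma apply_add_int_mul (k : ℤ) (t : ℝ) : Γ (t + k * L) = Γ t := by
  simpa using hΓ.periodic.int_mul k t

lemma exists_add_int_mul_mem_Ioc (x t : ℝ) : ∃ k : ℤ, t + k * L ∈ Ioc x (x + L) := by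
  simpa using (existsUnique_add_zsmul_mem_Ioc hΓ.period_pos t x).exists

lemma exists_le_inner_Icc (n : V) (x : ℝ) : ∃ s ∈ Icc x (x + L), σ * ‖n‖ ≤ ⟪n, Γ s⟫ := by
  obtain ⟨s, hs⟩ := hΓ.exists_le_inner n
  obtain ⟨k, hk⟩ := hΓ.exists_add_int_mul_mem_Ioc x s
  exact ⟨_, Ioc_subset_Icc_self hk, by rwa [hΓ.apply_add_int_mul]⟩

lemma exists_norm_le : ∃ M, ∀ t, ‖Γ t‖ ≤ M := by
  obtain ⟨M, hM⟩ := (isCompact_Icc (a := (0 : ℝ)) (b := L)).exists_bound_of_continuousOn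
    hΓ.continuous.continuousOn
  refine ⟨M, fun t => ?_⟩
  obtain ⟨s, hs, hst⟩ := hΓ.periodic.exists_mem_Ico₀ hΓ.period_pos t
  exact hst ▸ hM s (Ico_subset_Icc_self hs)

lemma exists_extremal_isMax {n : V} (hn : n ≠ 0) :
    ∃ s ∈ extremalTimes Γ, ∀ t, ⟪n, Γ t⟫ ≤ ⟪n, Γ s⟫ := by
  obtain ⟨s, -, hs⟩ := (isCompact_Icc (a := (0 : ℝ)) (b := L)).exists_isMaxOn
    (nonempty_Icc.2 hΓ.period_pos.le) (f := fun t => ⟪n, Γ t⟫)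
    (continuous_const.inner hΓ.continuous).continuousOn
  have hmax (t : ℝ) : ⟪n, Γ t⟫ ≤ ⟪n, Γ s⟫ := by
    obtain ⟨t', ht', htt'⟩ := hΓ.periodic.exists_mem_Ico₀ hΓ.period_pos t
    exact htt' ▸ hs (Ico_subset_Icc_self ht')
  refine ⟨s, ⟨‖n‖⁻¹ • n, norm_smul_inv_norm hn, fun t => ?_⟩, hmax⟩
  simpa only [inner_smul_left] using mul_le_mul_of_nonneg_left (hmax t) (by simp)

lemma extremalTimes_nonempty [Nontrivial V] : (extremalTimes Γ).Nonempty :=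
  have ⟨_, hn⟩ := exists_ne (0 : V)
  have ⟨s, hs, _⟩ := hΓ.exists_extremal_isMax hn
  ⟨s, hs⟩

lemma add_int_mul_mem_extremalTimes {t : ℝ} (k : ℤ) (ht : t ∈ extremalTimes Γ) :
    t + k * L ∈ extremalTimes Γ := by
  obtain ⟨n, hn, hmax⟩ := ht
  exact ⟨n, hn, fun s => (hΓ.apply_add_int_mul k t).symm ▸ hmax s⟩

lemma one_le_inner {n : V} {t : ℝ} (hn : ‖n‖ = 1) (hmax : ∀ s, ⟪n, Γ s⟫ ≤ ⟪n, Γ t⟫) :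
    1 ≤ ⟪n, Γ t⟫ := by
  obtain ⟨s, hs⟩ := hΓ.exists_le_inner n
  rw [hn, mul_one] at hs
  exact hΓ.one_le.trans (hs.trans (hmax s))

lemma one_le_norm {t : ℝ} (ht : t ∈ extremalTimes Γ) : 1 ≤ ‖Γ t‖ := by
  obtain ⟨n, hn, hmax⟩ := ht
  simpa [hn] using (hΓ.one_le_inner hn hmax).trans (real_inner_le_norm n (Γ t))

lemma sq_inner_deriv_le {t : ℝ} {v : V} (ht : t ∈ extremalTimes Γ) (hv : HasDerivAt Γ v t)
    (hv1 : ‖v‖ ≤ 1) : ⟪Γ t, v⟫ ^ 2 ≤ ‖Γ t‖ ^ 2 - 1 := by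
  obtain ⟨n, hn, hmax⟩ := ht
  have hnv : ⟪n, v⟫ = 0 :=
    IsLocalMax.hasDerivAt_eq_zero (.of_forall hmax) (hasDerivAt_const_inner hv n)
  have hn1 : 1 ≤ ⟪Γ t, n⟫ := real_inner_comm n (Γ t) ▸ hΓ.one_le_inner hn hmax
  calc ⟪Γ t, v⟫ ^ 2 = ⟪Γ t - ⟪Γ t, n⟫ • n, v⟫ ^ 2 := by
        rw [inner_sub_left, inner_smul_left, hnv, mul_zero, sub_zero]
    _ ≤ ‖Γ t - ⟪Γ t, n⟫ • n‖ ^ 2 := sq_le_sq.2 <| (abs_real_inner_le_norm _ _).trans <| by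
        simpa using mul_le_of_le_one_right (norm_nonneg _) hv1
    _ = ‖Γ t‖ ^ 2 - ⟪Γ t, n⟫ ^ 2 := norm_sub_inner_smul_sq hn
    _ ≤ ‖Γ t‖ ^ 2 - 1 := by nlinarith

-- Replacing the arc over a gap by its chord keeps all the support points.
lemma gap_length_le_dist {x y : ℝ} (hyL : y ≤ x + L) (hgap : Disjoint (Ioo x y) (extremalTimes Γ)) :
    y - x ≤ ‖Γ y - Γ x‖ := by
  set d := x + L
  let segment : ℝ → V := fun t => Γ x + (t - d) • (Γ y - Γ x)
  set β : ℝ → V := fun t => if t ≤ d then Γ t else segment t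
  have hΓd : Γ d = Γ x := hΓ.periodic x
  have β_of_le {t : ℝ} (ht : t ≤ d) : β t = Γ t := if_pos ht
  have β_of_ge {t : ℝ} (ht : d ≤ t) : β t = segment t := by
    rcases ht.eq_or_lt with rfl | ht
    · simp [β, segment, hΓd]
    · exact if_neg ht.not_ge
  have β_cont : Continuous β := Continuous.if_le hΓ.continuous (by fun_prop) continuous_id
    continuous_const fun t ht => by simp [segment, ht, hΓd]
  have β_closed : β y = β (d + 1) := by simp [β_of_le hyL, β_of_ge, segment]
  have β_support (n : V) : ∃ s ∈ Icc y (d + 1), σ * ‖n‖ ≤ ⟪n, β s⟫ := by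
    rcases eq_or_ne n 0 with rfl | hn
    · exact ⟨y, ⟨le_rfl, by linarith⟩, by simp⟩
    obtain ⟨s, hs, hmax⟩ := hΓ.exists_extremal_isMax hn
    obtain ⟨s₀, hs₀⟩ := hΓ.exists_le_inner n
    obtain ⟨k, hk⟩ := hΓ.exists_add_int_mul_mem_Ioc x s
    have hy : y ≤ s + k * L := le_of_not_gt fun hlt =>
      disjoint_left.1 hgap ⟨hk.1, hlt⟩ (hΓ.add_int_mul_mem_extremalTimes k hs)
    refine ⟨s + k * L, ⟨hy, by linarith [hk.2]⟩, ?_⟩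
    rw [β_of_le hk.2, hΓ.apply_add_int_mul]
    exact hs₀.trans (hmax s₀)
  have segment_lip : LipschitzWith ‖Γ y - Γ x‖₊ segment := .of_dist_le_mul fun s t => by
    rw [dist_eq_norm, add_sub_add_left_eq_sub, ← sub_smul, norm_smul, Real.dist_eq]
    simp [mul_comm]
  have hlength : ENNReal.ofReal L ≤ ENNReal.ofReal (d - y + ‖Γ y - Γ x‖) := calc
    ENNReal.ofReal L ≤ eVariationOn β (Icc y (d + 1)) :=
      hΓ.le_eVariationOn _ _ β (by linarith) β_cont.continuousOn β_closed β_support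
    _ = eVariationOn Γ (Icc y d) + eVariationOn segment (Icc d (d + 1)) := by
      rw [← eVariationOn.congr fun t ht => β_of_le (mem_Icc.1 ht).2,
        ← eVariationOn.congr fun t ht => β_of_ge (mem_Icc.1 ht).1]
      simpa using (eVariationOn.Icc_add_Icc β hyL (by linarith : d ≤ d + 1) (mem_univ d)).symm
    _ ≤ ENNReal.ofReal (d - y) + ENNReal.ofReal ‖Γ y - Γ x‖ := by
      gcongr
      · simpa using eVariationOn_Icc_le_of_lipschitzOnWith
          (hΓ.lipschitz.lipschitzOnWith (s := Icc y d))
      · simpa [enorm_eq_nnnorm] using eVariationOn_Icc_le_of_lipschitzOnWith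
          (segment_lip.lipschitzOnWith (s := Icc d (d + 1)))
    _ = _ := (ENNReal.ofReal_add (sub_nonneg.2 hyL) (norm_nonneg _)).symm
  rw [ENNReal.ofReal_le_ofReal_iff (add_nonneg (sub_nonneg.2 hyL) (norm_nonneg _))] at hlength
  linarith

lemma isChord_of_isGap {x y : ℝ} (h : IsGap (extremalTimes Γ) x y) : ∃ T, IsChord Γ x y T := by
  have hyL : y ≤ x + L := le_of_not_gt fun hlt => disjoint_left.1 h.disjoint
    ⟨lt_add_of_pos_right x hΓ.period_pos, hlt⟩
    (by simpa using hΓ.add_int_mul_mem_extremalTimes 1 h.left_mem)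
  obtain ⟨T, hT, haff⟩ := exists_unit_direction_of_length_le_dist hΓ.lipschitz h.lt
    (hΓ.gap_length_le_dist hyL h.disjoint)
  exact ⟨T, h.lt, h.left_mem, h.right_mem, hT, haff⟩

/- The nearest point `f` of the line to `0` is strictly inside every supporting half-space, so
both ends of the chord lie beyond it. -/
lemma inner_neg_and_pos_of_isChord {x y : ℝ} {T : V} (hc : IsChord Γ x y T)
    (hdist : ‖Γ x‖ ^ 2 - ⟪Γ x, T⟫ ^ 2 < 1) :
    ⟪Γ x, T⟫ < 0 ∧ 0 < ⟪Γ x, T⟫ + (y - x) := by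
  set h := ⟪Γ x, T⟫
  set f : V := Γ x - h • T with hf
  have hfnorm : ‖f‖ < 1 := by
    rw [← norm_sub_inner_smul_sq hc.norm_eq_one] at hdist
    exact lt_of_pow_lt_pow_left₀ 2 zero_le_one (by simpa using hdist)
  have hfinner {n : V} (hn : ‖n‖ = 1) : ⟪n, f⟫ < 1 :=
    (real_inner_le_norm n f).trans_lt (by simpa [hn] using hfnorm)
  have hΓx : Γ x = f + h • T := by simp [hf]
  have hΓy : Γ y = f + (h + (y - x)) • T := by
    rw [hc.eq_add_smul y (right_mem_Icc.2 hc.lt.le), hΓx, add_assoc, ← add_smul]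
  obtain ⟨n, hn, hnmax⟩ := hc.left_mem
  obtain ⟨m, hm, hmmax⟩ := hc.right_mem
  have hn1 := hΓ.one_le_inner hn hnmax
  have hm1 := hΓ.one_le_inner hm hmmax
  have hny := hnmax y
  have hmx := hmmax x
  simp only [hΓx, hΓy, inner_add_right, inner_smul_right] at hn1 hm1 hny hmx
  have hlt := sub_pos.2 hc.lt
  constructor
  · have hnT : ⟪n, T⟫ ≤ 0 := by nlinarith
    exact neg_of_mul_pos_left (by linarith [hfinner hn] : 0 < h * ⟪n, T⟫) hnT
  · have hmT : 0 ≤ ⟪m, T⟫ := by nlinarith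
    exact pos_of_mul_pos_left (by linarith [hfinner hm] : 0 < (h + (y - x)) * ⟪m, T⟫) hmT

end IsShortestLoop

end ShortestLoop

section FirstVariation

lemma norm_add_smul_le {V : Type*} [NormedAddCommGroup V] [InnerProductSpace ℝ V] {u w : V}
    {ε K : ℝ} (hu : ‖u‖ ≤ 1) (hw : ‖w‖ ≤ K) : ‖u + ε • w‖ ≤ 1 + ε ^ 2 * K ^ 2 / 2 + ε * ⟪u, w⟫ := by
  have hsq : ‖u + ε • w‖ ^ 2 = ‖u‖ ^ 2 + 2 * (ε * ⟪u, w⟫) + ε ^ 2 * ‖w‖ ^ 2 := by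
    rw [norm_add_sq_real, inner_smul_right, norm_smul, mul_pow, norm_eq_abs, sq_abs]
  have hu2 : ‖u‖ ^ 2 ≤ 1 := pow_le_one₀ (norm_nonneg _) hu
  have hw2 : ε ^ 2 * ‖w‖ ^ 2 ≤ ε ^ 2 * K ^ 2 := by gcongr
  linarith [sq_nonneg (‖u + ε • w‖ - 1)]

variable {V : Type*} [NormedAddCommGroup V] [InnerProductSpace ℝ V] [FiniteDimensional ℝ V]

namespace IsShortestLoop

variable {Γ : ℝ → V} {L σ : ℝ} (hΓ : IsShortestLoop Γ L σ)
include hΓ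

lemma period_le_integral_norm_deriv {β : ℝ → V} {K : ℝ≥0} (hβ : LipschitzWith K β) {a : ℝ}
    (hclosed : β a = β (a + L)) (hsupp : ∀ n : V, ∃ s ∈ Icc a (a + L), σ * ‖n‖ ≤ ⟪n, β s⟫) :
    L ≤ ∫ t in a..a + L, ‖deriv β t‖ := by
  have haL : a < a + L := lt_add_of_pos_right a hΓ.period_pos
  have hle := (hΓ.le_eVariationOn a (a + L) β haL hβ.continuous.continuousOn hclosed hsupp).trans
    (eVariationOn_Icc_le_integral_norm_deriv hβ a (a + L))
  rwa [ENNReal.ofReal_le_ofReal_iff (intervalIntegral.integral_nonneg haL.le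
    fun _ _ => norm_nonneg _)] at hle

lemma norm_deriv_eq_one (a : ℝ) : ∀ᵐ t ∂volume.restrict (Ioc a (a + L)), ‖deriv Γ t‖ = 1 := by
  have := FiniteDimensional.complete ℝ V
  have haL : a ≤ a + L := le_add_of_nonneg_right hΓ.period_pos.le
  have hlen := hΓ.period_le_integral_norm_deriv hΓ.lipschitz (hΓ.periodic a).symm
    (hΓ.exists_le_inner_Icc · a)
  have hspeed := intervalIntegrable_norm_deriv hΓ.lipschitz a (a + L)
  have hdefect_nonneg (t : ℝ) : 0 ≤ 1 - ‖deriv Γ t‖ := sub_nonneg.2 (hΓ.norm_deriv_le_one t)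
  have hdefect : ∫ t in a..a + L, (1 - ‖deriv Γ t‖) = 0 := by
    refine le_antisymm ?_ (intervalIntegral.integral_nonneg haL fun t _ => hdefect_nonneg t)
    rw [intervalIntegral.integral_sub (by simp) hspeed]
    simpa using hlen
  rw [intervalIntegral.integral_eq_zero_iff_of_le_of_nonneg_ae haL (.of_forall hdefect_nonneg)
    (intervalIntegrable_const.sub hspeed)] at hdefect
  filter_upwards [hdefect] with t ht
  exact (sub_eq_zero.1 ht).symm

lemma intervalIntegrable_inner_deriv_deriv {W : ℝ → V} {K : ℝ≥0} (hW : LipschitzWith K W)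
    (a b : ℝ) : IntervalIntegrable (fun t => ⟪deriv Γ t, deriv W t⟫) volume a b := by
  have := FiniteDimensional.complete ℝ V
  borelize V
  refine intervalIntegrable_of_forall_abs_le (M := K)
    ((measurable_deriv Γ).inner (measurable_deriv W)) (fun t => ?_) a b
  calc |⟪deriv Γ t, deriv W t⟫| ≤ ‖deriv Γ t‖ * ‖deriv W t‖ := abs_real_inner_le_norm _ _
    _ ≤ 1 * K := by
      gcongr
      exacts [hΓ.norm_deriv_le_one t, norm_deriv_le_of_lipschitz hW]
    _ = K := one_mul _

theorem integral_inner_deriv_nonneg {W : ℝ → V} {K : ℝ≥0} (hW : LipschitzWith K W) {a : ℝ}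
    (hclosed : W a = W (a + L))
    (hsupp : ∀ ε : ℝ, 0 < ε → ∀ n : V, ∃ s ∈ Icc a (a + L), σ * ‖n‖ ≤ ⟪n, Γ s + ε • W s⟫) :
    0 ≤ ∫ t in a..a + L, ⟪deriv Γ t, deriv W t⟫ := by
  have := FiniteDimensional.complete ℝ V
  have haL : a ≤ a + L := le_add_of_nonneg_right hΓ.period_pos.le
  have hint := hΓ.intervalIntegrable_inner_deriv_deriv hW a (a + L)
  set I := ∫ t in a..a + L, ⟪deriv Γ t, deriv W t⟫
  have hquad (ε : ℝ) (hε : 0 < ε) : 0 ≤ I + ε * (K ^ 2 / 2 * L) := by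
    have hβ : LipschitzWith (1 + ⟨ε, hε.le⟩ * K) (fun t => Γ t + ε • W t) := by
      have hεW := (lipschitzWith_smul ε).comp hW
      rw [nnnorm_of_nonneg hε.le] at hεW
      exact hΓ.lipschitz.add hεW
    have hlen : L ≤ ∫ t in a..a + L, (1 + ε ^ 2 * K ^ 2 / 2 + ε * ⟪deriv Γ t, deriv W t⟫) := by
      refine (hΓ.period_le_integral_norm_deriv hβ (a := a)
        (by simp only [hclosed, hΓ.periodic a]) (hsupp ε hε)).trans ?_
      refine intervalIntegral.integral_mono_ae haL (intervalIntegrable_norm_deriv hβ _ _)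
        (intervalIntegrable_const.add (hint.const_mul _)) ?_
      filter_upwards [hΓ.lipschitz.ae_differentiableAt_real, hW.ae_differentiableAt_real]
        with t hΓt hWt
      rw [(hΓt.hasDerivAt.fun_add (hWt.hasDerivAt.fun_const_smul ε)).deriv]
      exact norm_add_smul_le (hΓ.norm_deriv_le_one t) (norm_deriv_le_of_lipschitz hW)
    rw [intervalIntegral.integral_add intervalIntegrable_const (hint.const_mul _),
      intervalIntegral.integral_const_mul, intervalIntegral.integral_const, add_sub_cancel_left,
      smul_eq_mul] at hlen
    exact nonneg_of_mul_nonneg_right (by linarith : 0 ≤ ε * (I + ε * (K ^ 2 / 2 * L))) hε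
  have hlim : Filter.Tendsto (fun ε => I + ε * (K ^ 2 / 2 * L)) (nhdsWithin 0 (Ioi 0)) (nhds I) :=
    ((Continuous.tendsto' (by fun_prop) 0 I (by simp)).mono_left nhdsWithin_le_nhds)
  exact ge_of_tendsto hlim (eventually_mem_nhdsWithin.mono hquad)

lemma intervalIntegrable_sq_inner_deriv (a b : ℝ) :
    IntervalIntegrable (fun t => ⟪Γ t, deriv Γ t⟫ ^ 2) volume a b := by
  have := FiniteDimensional.complete ℝ V
  borelize V
  obtain ⟨M, hM⟩ := hΓ.exists_norm_le
  refine intervalIntegrable_of_forall_abs_le (M := (M * 1) ^ 2)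
    ((hΓ.continuous.measurable.inner (measurable_deriv Γ)).pow_const 2) (fun t => ?_) a b
  rw [abs_of_nonneg (sq_nonneg _), ← sq_abs]
  gcongr
  calc |⟪Γ t, deriv Γ t⟫| ≤ ‖Γ t‖ * ‖deriv Γ t‖ := abs_real_inner_le_norm _ _
    _ ≤ M * 1 := by
      gcongr
      exacts [(norm_nonneg _).trans (hM t), hM t, hΓ.norm_deriv_le_one t]

variable {P P' : ℝ → ℝ} (hP : ∀ f, HasDerivAt P (P' f) f) (hP' : Continuous P')
include hP hP'

lemma exists_lipschitzWith_radial : ∃ K, LipschitzWith K fun t => P (‖Γ t‖ ^ 2) • Γ t := by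
  have hPdiff : ContDiff ℝ 1 P := contDiff_one_iff_deriv.2
    ⟨fun f => (hP f).differentiableAt, (funext fun f => (hP f).deriv) ▸ hP'⟩
  have hfield : ContDiff ℝ 1 fun x : V => P (‖x‖ ^ 2) • x :=
    (hPdiff.comp (contDiff_norm_sq ℝ)).smul contDiff_id
  obtain ⟨M, hM⟩ := hΓ.exists_norm_le
  obtain ⟨K, hK⟩ := hfield.contDiffOn.exists_lipschitzOnWith one_ne_zero
    (convex_closedBall 0 M) (isCompact_closedBall (0 : V) M)
  exact ⟨_, lipschitzOnWith_univ.1 <| hK.comp (lipschitzOnWith_univ.2 hΓ.lipschitz)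
    fun t _ => by simpa using hM t⟩

lemma intervalIntegrable_radial (a b : ℝ) : IntervalIntegrable
    (fun t => P (‖Γ t‖ ^ 2) + 2 * P' (‖Γ t‖ ^ 2) * ⟪Γ t, deriv Γ t⟫ ^ 2) volume a b := by
  have hPcont : Continuous P := continuous_iff_continuousAt.2 fun f => (hP f).continuousAt
  have hnorm : Continuous fun t => ‖Γ t‖ ^ 2 := hΓ.continuous.norm.pow 2
  exact ((hPcont.comp hnorm).intervalIntegrable a b).add <|
    (hΓ.intervalIntegrable_sq_inner_deriv a b).continuousOn_mul
      (continuous_const.mul (hP'.comp hnorm)).continuousOn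

lemma integral_radial_nonneg (hP0 : ∀ f, 0 ≤ P f) (a : ℝ) :
    0 ≤ ∫ t in a..a + L, (P (‖Γ t‖ ^ 2) + 2 * P' (‖Γ t‖ ^ 2) * ⟪Γ t, deriv Γ t⟫ ^ 2) := by
  obtain ⟨K, hK⟩ := hΓ.exists_lipschitzWith_radial hP hP'
  have hsupp (ε : ℝ) (hε : 0 < ε) (n : V) :
      ∃ s ∈ Icc a (a + L), σ * ‖n‖ ≤ ⟪n, Γ s + ε • P (‖Γ s‖ ^ 2) • Γ s⟫ := by
    obtain ⟨s, hs, hn⟩ := hΓ.exists_le_inner_Icc n a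
    have hinner : 0 ≤ ⟪n, Γ s⟫ :=
      (mul_nonneg (zero_le_one.trans hΓ.one_le) (norm_nonneg n)).trans hn
    refine ⟨s, hs, hn.trans ?_⟩
    rw [inner_add_right, inner_smul_right, inner_smul_right]
    exact le_add_of_nonneg_right (mul_nonneg hε.le (mul_nonneg (hP0 _) hinner))
  refine (hΓ.integral_inner_deriv_nonneg hK (a := a) (by simp only [hΓ.periodic a]) hsupp).trans <|
    intervalIntegral.integral_mono_ae (le_add_of_nonneg_right hΓ.period_pos.le)
      (hΓ.intervalIntegrable_inner_deriv_deriv hK _ _)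
      (hΓ.intervalIntegrable_radial hP hP' _ _) ?_
  filter_upwards [hΓ.lipschitz.ae_differentiableAt_real] with t ht
  have hW : deriv (fun t => P (‖Γ t‖ ^ 2) • Γ t) t = _ :=
    (((hP (‖Γ t‖ ^ 2)).comp t ht.hasDerivAt.norm_sq).smul ht.hasDerivAt).deriv
  rw [hW, inner_add_right, inner_smul_right, inner_smul_right, real_inner_self_eq_norm_sq,
    Function.comp_apply, real_inner_comm (Γ t)]
  have hspeed : P (‖Γ t‖ ^ 2) * ‖deriv Γ t‖ ^ 2 ≤ P (‖Γ t‖ ^ 2) :=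
    mul_le_of_le_one_right (hP0 _) (pow_le_one₀ (norm_nonneg _) (hΓ.norm_deriv_le_one t))
  linarith

end IsShortestLoop

end FirstVariation

section Crossings

/-- A window: a continuous probability density supported in `[lo, hi]`, used as a smoothed
indicator of the position of a hyperplane. -/
structure IsWindow (w : ℝ → ℝ) (lo hi : ℝ) : Prop where
  continuous : Continuous w
  nonneg : ∀ s, 0 ≤ w s
  eq_zero_of_notMem : ∀ s ∉ Ioo lo hi, w s = 0
  integral_eq_one : ∫ s, w s = 1

lemma exists_isWindow {lo hi : ℝ} (h : lo < hi) : ∃ w, IsWindow w lo hi := by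
  let bump : ContDiffBump ((lo + hi) / 2) :=
    ⟨(hi - lo) / 4, (hi - lo) / 2, by linarith, by linarith⟩
  refine ⟨bump.normed volume, bump.continuous_normed, bump.nonneg_normed, fun s hs => ?_,
    bump.integral_normed⟩
  rw [← Function.notMem_support, bump.support_normed_eq, Real.ball_eq_Ioo]
  convert hs using 3 <;> simp only [bump] <;> ring

namespace IsWindow

variable {w : ℝ → ℝ} {lo hi : ℝ} (hw : IsWindow w lo hi)
include hw

lemma exists_le : ∃ M : ℝ≥0, ∀ s, w s ≤ M := by
  obtain ⟨M, hM⟩ := (isCompact_Icc (a := lo) (b := hi)).exists_bound_of_continuousOn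
    hw.continuous.continuousOn
  refine ⟨M.toNNReal, fun s => ?_⟩
  by_cases hs : s ∈ Ioo lo hi
  · exact (le_norm_self _).trans ((hM s (Ioo_subset_Icc_self hs)).trans (le_coe_toNNReal M))
  · exact (hw.eq_zero_of_notMem s hs).trans_le M.toNNReal.coe_nonneg

lemma integrable : Integrable w :=
  .of_integral_ne_zero (hw.integral_eq_one.trans_ne one_ne_zero)

lemma integral_eq_one_of_subset {p q : ℝ} (hpq : p ≤ q) (hp : p ≤ lo) (hq : hi ≤ q) :
    ∫ s in p..q, w s = 1 := by
  rw [intervalIntegral.integral_of_le hpq, ← hw.integral_eq_one]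
  exact setIntegral_eq_integral_of_forall_compl_eq_zero fun s hs =>
    hw.eq_zero_of_notMem s fun hs' => hs ⟨hp.trans_lt hs'.1, hs'.2.le.trans hq⟩

lemma integral_eq_zero_of_le {p q : ℝ} (hp : p ≤ lo) (hq : q ≤ lo) : ∫ s in p..q, w s = 0 :=
  intervalIntegral.integral_zero_ae <| .of_forall fun s hs =>
    hw.eq_zero_of_notMem s fun hs' => (hs.2.trans (max_le hp hq)).not_gt hs'.1

lemma abs_integral_le_one (p q : ℝ) : |∫ s in p..q, w s| ≤ 1 := by
  rw [← hw.integral_eq_one, intervalIntegral.abs_integral_eq_abs_integral_uIoc,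
    abs_of_nonneg (integral_nonneg hw.nonneg)]
  exact setIntegral_le_integral hw.integrable (.of_forall hw.nonneg)

end IsWindow

/-- The spherical shell between the spheres of radius `1` and `R`. -/
def shell (V : Type*) [NormedAddCommGroup V] (R : ℝ) : Set V := {x | ‖x‖ ∈ Icc 1 R}

lemma measurableSet_shell (V : Type*) [NormedAddCommGroup V] [MeasurableSpace V] [BorelSpace V]
    (R : ℝ) : MeasurableSet (shell V R) :=
  measurable_norm measurableSet_Icc

lemma volume_shell_lt_top (V : Type*) [NormedAddCommGroup V] [InnerProductSpace ℝ V]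
    [FiniteDimensional ℝ V] [MeasurableSpace V] [BorelSpace V] (R : ℝ) : volume (shell V R) < ⊤ :=
  (measure_mono fun _ hx => mem_closedBall_zero_iff.2 hx.2).trans_lt
    (measure_closedBall_lt_top (x := (0 : V)) (r := R))

variable {V : Type*} [NormedAddCommGroup V] [InnerProductSpace ℝ V]

/-- The rate at which `Γ` crosses the hyperplanes orthogonal to `x` whose height `⟪x, ·⟫` is
distributed with density `w`. -/
def crossingDensity (w : ℝ → ℝ) (Γ : ℝ → V) (x : V) (t : ℝ) : ℝ :=
  w ⟪x, Γ t⟫ * |⟪x, deriv Γ t⟫|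

/-- The crossing density of `Γ`, integrated over the normals `x` in the shell of radii `1`, `R`. -/
def shellCrossing [MeasurableSpace V] [BorelSpace V] [FiniteDimensional ℝ V] (w : ℝ → ℝ) (R : ℝ)
    (Γ : ℝ → V) (t : ℝ) : ℝ :=
  ∫ x in shell V R, crossingDensity w Γ x t

variable {w : ℝ → ℝ} {lo hi : ℝ} {Γ : ℝ → V}

lemma crossingDensity_nonneg (hw : IsWindow w lo hi) (x : V) (t : ℝ) :
    0 ≤ crossingDensity w Γ x t :=
  mul_nonneg (hw.nonneg _) (abs_nonneg _)

lemma crossingDensity_le {M : ℝ≥0} (hM : ∀ s, w s ≤ M) (hΓ : LipschitzWith 1 Γ) (x : V)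
    (t : ℝ) : crossingDensity w Γ x t ≤ M * ‖x‖ := by
  have hspeed : ‖deriv Γ t‖ ≤ 1 := by simpa using norm_deriv_le_of_lipschitz hΓ
  unfold crossingDensity
  gcongr
  · exact hM _
  · exact (abs_real_inner_le_norm _ _).trans (mul_le_of_le_one_right (norm_nonneg _) hspeed)

lemma integral_crossingDensity_of_affine (hw : IsWindow w lo hi) (x : V) {T : V} {a b : ℝ}
    (hab : a ≤ b) (haff : ∀ t ∈ Icc a b, Γ t = Γ a + (t - a) • T) :
    ∫ t in a..b, crossingDensity w Γ x t = |∫ s in ⟪x, Γ a⟫..⟪x, Γ b⟫, w s| := by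
  set height : ℝ → ℝ := fun t => ⟪x, Γ a⟫ + (t - a) * ⟪x, T⟫
  have hheight_eq {t : ℝ} (ht : t ∈ Icc a b) : ⟪x, Γ t⟫ = height t := by
    rw [haff t ht, inner_add_right, inner_smul_right]
  have hderiv (t : ℝ) : HasDerivAt height ⟪x, T⟫ t := by
    simpa [height] using (((hasDerivAt_id t).sub_const a).mul_const ⟪x, T⟫).const_add ⟪x, Γ a⟫
  have hdensity : ∀ᵐ t, t ∈ uIoc a b →
      crossingDensity w Γ x t = |(w ∘ height) t * ⟪x, T⟫| := by
    filter_upwards [volume.ae_ne b] with t htb ht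
    rw [uIoc_of_le hab] at ht
    have hΓt : HasDerivAt Γ T t := by
      have haff' : HasDerivAt (fun t => Γ a + (t - a) • T) T t := by
        simpa using (((hasDerivAt_id t).sub_const a).smul_const T).const_add (Γ a)
      exact haff'.congr_of_eventuallyEq <| Filter.eventually_of_mem
        (Icc_mem_nhds ht.1 (lt_of_le_of_ne ht.2 htb)) haff
    rw [crossingDensity, hheight_eq (Ioc_subset_Icc_self ht), hΓt.deriv, abs_mul,
      Function.comp_apply, abs_of_nonneg (hw.nonneg _)]
  have hsubst : ∫ t in a..b, (w ∘ height) t * ⟪x, T⟫ = ∫ s in ⟪x, Γ a⟫..⟪x, Γ b⟫, w s := by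
    rw [intervalIntegral.integral_comp_mul_deriv (fun t _ => hderiv t) continuousOn_const
      hw.continuous, hheight_eq (right_mem_Icc.2 hab), hheight_eq (left_mem_Icc.2 hab)]
  rw [intervalIntegral.integral_congr_ae hdensity, ← hsubst]
  simp only [abs_mul, Function.comp_apply, abs_of_nonneg (hw.nonneg _),
    intervalIntegral.integral_mul_const]
  rw [abs_of_nonneg (intervalIntegral.integral_nonneg hab fun t _ => hw.nonneg _)]

lemma IsShortestLoop.periodic_crossingDensity {L σ : ℝ} (hΓ : IsShortestLoop Γ L σ) (w : ℝ → ℝ)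
    (x : V) :
    Function.Periodic (crossingDensity w Γ x) L := by
  intro t
  have hderiv : deriv Γ (t + L) = deriv Γ t := by
    rw [← deriv_comp_add_const, funext hΓ.periodic]
  rw [crossingDensity, crossingDensity, hΓ.periodic t, hderiv]

section FiniteDimensional

variable [FiniteDimensional ℝ V]

lemma abs_integral_window_le (hw : IsWindow w lo hi) (hΓ : LipschitzWith 1 Γ) (x : V) {a b : ℝ}
    (hab : a ≤ b) :
    |∫ s in ⟪x, Γ a⟫..⟪x, Γ b⟫, w s| ≤ ∫ t in a..b, crossingDensity w Γ x t := by
  obtain ⟨M, hM⟩ := hw.exists_le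
  set W : ℝ → ℝ := fun u => ∫ s in (0 : ℝ)..u, w s
  have hW (u : ℝ) : HasDerivAt W (w u) u := (hw.continuous.integral_hasStrictDerivAt 0 u).hasDerivAt
  have hWlip : LipschitzWith M W := lipschitzWith_of_nnnorm_deriv_le
    (fun u => (hW u).differentiableAt) fun u => by
      rw [(hW u).deriv, ← NNReal.coe_le_coe, coe_nnnorm, Real.norm_of_nonneg (hw.nonneg u)]
      exact hM u
  have hlip : LipschitzWith _ (W ∘ fun t => ⟪x, Γ t⟫) :=
    hWlip.comp ((innerSL ℝ x).lipschitz.comp hΓ)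
  have hae : ∀ᵐ t, t ∈ uIoc a b → |deriv (W ∘ fun t => ⟪x, Γ t⟫) t| = crossingDensity w Γ x t := by
    filter_upwards [hΓ.ae_differentiableAt_real] with t ht _
    rw [((hW _).comp t (hasDerivAt_const_inner ht.hasDerivAt x)).deriv, abs_mul,
      abs_of_nonneg (hw.nonneg _)]
    rfl
  calc |∫ s in ⟪x, Γ a⟫..⟪x, Γ b⟫, w s| = |∫ t in a..b, deriv (W ∘ fun t => ⟪x, Γ t⟫) t| := by
        rw [intervalIntegral_deriv_of_lipschitz hlip]
        exact congrArg _ (intervalIntegral.integral_interval_sub_left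
          (hw.continuous.intervalIntegrable _ _) (hw.continuous.intervalIntegrable _ _)).symm
    _ ≤ ∫ t in a..b, |deriv (W ∘ fun t => ⟪x, Γ t⟫) t| :=
        intervalIntegral.abs_integral_le_integral_abs hab
    _ = ∫ t in a..b, crossingDensity w Γ x t := intervalIntegral.integral_congr_ae hae

variable [MeasurableSpace V] [BorelSpace V]

lemma measurable_crossingDensity (hw : IsWindow w lo hi) (hΓ : Continuous Γ) :
    Measurable fun z : ℝ × V => crossingDensity w Γ z.2 z.1 := by
  have := FiniteDimensional.complete ℝ V
  have hderiv : Measurable fun z : ℝ × V => ⟪z.2, deriv Γ z.1⟫ :=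
    measurable_snd.inner ((measurable_deriv Γ).comp measurable_fst)
  exact (hw.continuous.comp (continuous_snd.inner (hΓ.comp continuous_fst))).measurable.mul
    hderiv.abs

lemma intervalIntegrable_crossingDensity (hw : IsWindow w lo hi) (hΓ : LipschitzWith 1 Γ)
    (x : V) (a b : ℝ) : IntervalIntegrable (crossingDensity w Γ x) volume a b := by
  obtain ⟨M, hM⟩ := hw.exists_le
  have hmeas : Measurable (crossingDensity w Γ x) :=
    (measurable_crossingDensity hw hΓ.continuous).comp (measurable_id.prodMk measurable_const)
  refine intervalIntegrable_of_forall_abs_le hmeas (M := M * ‖x‖) (fun t => ?_) a b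
  rw [abs_of_nonneg (crossingDensity_nonneg hw x t)]
  exact crossingDensity_le hM hΓ x t

lemma integrable_crossingDensity_prod (hw : IsWindow w lo hi) (hΓ : LipschitzWith 1 Γ)
    (R a b : ℝ) : Integrable (fun z : ℝ × V => crossingDensity w Γ z.2 z.1)
      ((volume.restrict (Ioc a b)).prod (volume.restrict (shell V R))) := by
  obtain ⟨M, hM⟩ := hw.exists_le
  rw [Measure.prod_restrict]
  refine Measure.integrableOn_of_bounded (M := M * R) ?_
    (measurable_crossingDensity hw hΓ.continuous).aestronglyMeasurable ?_
  · rw [Measure.prod_prod]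
    exact ENNReal.mul_ne_top (by simp) (volume_shell_lt_top V R).ne
  · filter_upwards [ae_restrict_mem (measurableSet_Ioc.prod (measurableSet_shell V R))] with z hz
    rw [Real.norm_of_nonneg (crossingDensity_nonneg hw _ _)]
    exact (crossingDensity_le hM hΓ _ _).trans (by gcongr; exact hz.2.2)

lemma integrableOn_shellCrossing (hw : IsWindow w lo hi) (hΓ : LipschitzWith 1 Γ) (R a b : ℝ) :
    IntegrableOn (shellCrossing w R Γ) (Ioc a b) :=
  (integrable_crossingDensity_prod hw hΓ R a b).integral_prod_left

lemma integrableOn_integral_crossingDensity (hw : IsWindow w lo hi) (hΓ : LipschitzWith 1 Γ)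
    (R : ℝ) {a b : ℝ} (hab : a ≤ b) :
    IntegrableOn (fun x => ∫ t in a..b, crossingDensity w Γ x t) (shell V R) := by
  simp only [intervalIntegral.integral_of_le hab]
  exact (integrable_crossingDensity_prod hw hΓ R a b).integral_prod_right

lemma integral_shellCrossing (hw : IsWindow w lo hi) (hΓ : LipschitzWith 1 Γ) (R : ℝ) {a b : ℝ}
    (hab : a ≤ b) : ∫ t in a..b, shellCrossing w R Γ t =
      ∫ x in shell V R, ∫ t in a..b, crossingDensity w Γ x t := by
  simp only [intervalIntegral.integral_of_le hab, shellCrossing]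
  exact integral_integral_swap (integrable_crossingDensity_prod hw hΓ R a b)

namespace IsShortestLoop

variable {L σ : ℝ} (hΓ : IsShortestLoop Γ L σ)
include hΓ

lemma two_le_integral_crossingDensity (hw : IsWindow w lo hi) (hlo : 0 ≤ lo) (hhi : hi ≤ σ)
    {t₀ : ℝ} (h0 : Γ t₀ = 0) (a : ℝ) {x : V} (hx : 1 ≤ ‖x‖) :
    2 ≤ ∫ t in a..a + L, crossingDensity w Γ x t := by
  rw [(hΓ.periodic_crossingDensity w x).intervalIntegral_add_eq a t₀]
  obtain ⟨t₁, ht₁, hsupp⟩ := hΓ.exists_le_inner_Icc x t₀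
  have hσ : σ ≤ ⟪x, Γ t₁⟫ := (le_mul_of_one_le_right (by linarith [hΓ.one_le]) hx).trans hsupp
  have h0' : ⟪x, Γ t₀⟫ = 0 := by rw [h0, inner_zero_right]
  have hone : ∫ s in (0 : ℝ)..⟪x, Γ t₁⟫, w s = 1 :=
    hw.integral_eq_one_of_subset (by linarith [hΓ.one_le]) hlo (hhi.trans hσ)
  have hout := abs_integral_window_le hw hΓ.lipschitz x ht₁.1
  have hback := abs_integral_window_le hw hΓ.lipschitz x ht₁.2
  rw [h0', hone, abs_one] at hout
  rw [hΓ.periodic, h0', intervalIntegral.integral_symm, hone, abs_neg, abs_one] at hback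
  rw [← intervalIntegral.integral_add_adjacent_intervals
    (intervalIntegrable_crossingDensity hw hΓ.lipschitz x t₀ t₁)
    (intervalIntegrable_crossingDensity hw hΓ.lipschitz x t₁ (t₀ + L))]
  linarith

lemma two_mul_volume_shell_le (hw : IsWindow w lo hi) (hlo : 0 ≤ lo) (hhi : hi ≤ σ)
    {t₀ : ℝ} (h0 : Γ t₀ = 0) (R a : ℝ) :
    2 * volume.real (shell V R) ≤ ∫ t in a..a + L, shellCrossing w R Γ t := by
  have haL : a ≤ a + L := le_add_of_nonneg_right hΓ.period_pos.le
  rw [integral_shellCrossing hw hΓ.lipschitz R haL, mul_comm, ← smul_eq_mul, ← setIntegral_const]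
  exact setIntegral_mono_on (integrableOn_const (volume_shell_lt_top V R).ne)
    (integrableOn_integral_crossingDensity hw hΓ.lipschitz R haL) (measurableSet_shell V R)
    fun x hx => hΓ.two_le_integral_crossingDensity hw hlo hhi h0 a hx.1

end IsShortestLoop

end FiniteDimensional

end Crossings

section AngularIntegral

/-- The angular integral `∫ |α + β cos φ| dφ` over a full turn with `A = |α|`, `B = |β|`, in a form
monotone in both parameters. -/
def angularIntegral (A B : ℝ) : ℝ := 4 * ∫ φ in (0 : ℝ)..π / 2, max A (B * cos φ)

lemma angularIntegral_mono {A B A' B' : ℝ} (hA : A ≤ A') (hB : B ≤ B') :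
    angularIntegral A B ≤ angularIntegral A' B' := by
  refine mul_le_mul_of_nonneg_left (intervalIntegral.integral_mono_on (by positivity)
    (Continuous.intervalIntegrable (by fun_prop) _ _)
    (Continuous.intervalIntegrable (by fun_prop) _ _) fun φ hφ => ?_) (by norm_num)
  have hcos : 0 ≤ cos φ := cos_nonneg_of_neg_pi_div_two_le_of_le (by linarith [hφ.1, pi_pos]) hφ.2
  gcongr

lemma angularIntegral_nonneg {A : ℝ} (hA : 0 ≤ A) (B : ℝ) : 0 ≤ angularIntegral A B :=
  mul_nonneg (by norm_num) <| intervalIntegral.integral_nonneg (by positivity) fun _ _ =>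
    hA.trans (le_max_left _ _)

lemma angularIntegral_mul {k : ℝ} (hk : 0 ≤ k) (A B : ℝ) :
    angularIntegral (k * A) (k * B) = k * angularIntegral A B := by
  simp only [angularIntegral, mul_assoc, ← mul_max_of_nonneg _ _ hk,
    intervalIntegral.integral_const_mul]
  ring

lemma max_abs_abs_eq (u v : ℝ) : max |u| |v| = (|u + v| + |u - v|) / 2 := by
  grind

lemma integral_abs_add_mul_cos (α β : ℝ) :
    ∫ φ in (-π)..π, |α + β * cos φ| = angularIntegral |α| |β| := by
  have hint (β a b : ℝ) : IntervalIntegrable (fun φ => |α + β * cos φ|) volume a b :=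
    Continuous.intervalIntegrable (by fun_prop) _ _
  have heven : ∫ φ in (-π)..0, |α + β * cos φ| = ∫ φ in (0 : ℝ)..π, |α + β * cos φ| := by
    simpa using intervalIntegral.integral_comp_neg (a := -π) (b := 0) fun φ => |α + β * cos φ|
  have hreflect : ∫ φ in (π / 2)..π, |α + β * cos φ| =
      ∫ φ in (0 : ℝ)..π / 2, |α + (-β) * cos φ| := by
    have := intervalIntegral.integral_comp_sub_left (a := 0) (b := π / 2)
      (fun φ => |α + β * cos φ|) π
    simpa only [cos_pi_sub, mul_neg, neg_mul, sub_zero, sub_half] using this.symm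
  have hmax : ∫ φ in (0 : ℝ)..π / 2, max |α| (|β| * cos φ) =
      ∫ φ in (0 : ℝ)..π / 2, (|α + β * cos φ| + |α + (-β) * cos φ|) / 2 := by
    refine intervalIntegral.integral_congr fun φ hφ => ?_
    rw [uIcc_of_le (by positivity)] at hφ
    have hcos : 0 ≤ cos φ := cos_nonneg_of_neg_pi_div_two_le_of_le (by linarith [hφ.1, pi_pos]) hφ.2
    simp only [neg_mul, ← sub_eq_add_neg, ← max_abs_abs_eq, abs_mul, abs_of_nonneg hcos]
  rw [← intervalIntegral.integral_add_adjacent_intervals (hint β (-π) 0) (hint β 0 π), heven,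
    ← intervalIntegral.integral_add_adjacent_intervals (hint β 0 (π / 2)) (hint β (π / 2) π),
    hreflect, angularIntegral, hmax, intervalIntegral.integral_div,
    intervalIntegral.integral_add (hint _ _ _) (hint _ _ _)]
  ring

lemma lintegral_abs_add_mul_cos_le {α β A B : ℝ} (hα : |α| ≤ A) (hβ : |β| ≤ B) :
    ∫⁻ φ in Ioo (-π) π, ENNReal.ofReal |α + β * cos φ| ≤
      ENNReal.ofReal (angularIntegral A B) := by
  have hcont : Continuous fun φ => |α + β * cos φ| := by fun_prop
  have hπ : -π ≤ π := by linarith [pi_pos]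
  rw [setLIntegral_congr Ioo_ae_eq_Ioc, ← ofReal_integral_eq_lintegral_ofReal
      (hcont.intervalIntegrable _ _).1 (.of_forall fun _ => abs_nonneg _),
    ← intervalIntegral.integral_of_le hπ, integral_abs_add_mul_cos]
  exact ENNReal.ofReal_le_ofReal (angularIntegral_mono hα hβ)

lemma mul_sin_le_sin_mul {a ψ : ℝ} (ha0 : 0 ≤ a) (ha1 : a ≤ 1) (hψ : ψ ∈ Icc 0 π) :
    a * sin ψ ≤ sin (a * ψ) := by
  simpa using strictConcaveOn_sin_Icc.concaveOn.2 (left_mem_Icc.2 pi_pos.le) hψ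
    (sub_nonneg.2 ha1) ha0 (by ring)

/-- The positive part is supported in `[0, aπ/2]`; rescaling this interval to `[0, π/2]`, concavity
of `sin` bounds the integrand by `a (1 - sin ψ)`. -/
lemma integral_max_sub_sin_le {a : ℝ} (ha0 : 0 ≤ a) (ha1 : a ≤ 1) :
    ∫ ψ in (0 : ℝ)..π / 2, max 0 (a - sin ψ) ≤ (π / 2 - 1) * a ^ 2 := by
  have hint (p q : ℝ) : IntervalIntegrable (fun ψ => max 0 (a - sin ψ)) volume p q :=
    Continuous.intervalIntegrable (by fun_prop) _ _
  have htail : ∫ ψ in (a * (π / 2))..π / 2, max 0 (a - sin ψ) = 0 := by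
    refine intervalIntegral.integral_zero_ae (.of_forall fun ψ hψ => ?_)
    rw [uIoc_of_le (mul_le_of_le_one_left (by positivity) ha1)] at hψ
    have hjordan := mul_le_sin ((by positivity : 0 ≤ a * (π / 2)).trans hψ.1.le) hψ.2
    have ha : a = 2 / π * (a * (π / 2)) := by field_simp
    have : a ≤ 2 / π * ψ := ha.trans_le (by gcongr; exact hψ.1.le)
    exact max_eq_left (by linarith)
  calc ∫ ψ in (0 : ℝ)..π / 2, max 0 (a - sin ψ)
      = ∫ ψ in (0 : ℝ)..a * (π / 2), max 0 (a - sin ψ) := by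
        rw [← intervalIntegral.integral_add_adjacent_intervals (hint 0 (a * (π / 2))) (hint _ _),
          htail, add_zero]
    _ = a * ∫ ψ in (0 : ℝ)..π / 2, max 0 (a - sin (a * ψ)) := by
        simpa using (intervalIntegral.mul_integral_comp_mul_left (a := 0) (b := π / 2)
          (f := fun ψ => max 0 (a - sin ψ)) a).symm
    _ ≤ a * ∫ ψ in (0 : ℝ)..π / 2, a * (1 - sin ψ) := by
        refine mul_le_mul_of_nonneg_left (intervalIntegral.integral_mono_on (by positivity)
          (Continuous.intervalIntegrable (by fun_prop) _ _)
          (Continuous.intervalIntegrable (by fun_prop) _ _) fun ψ hψ => max_le ?_ ?_) ha0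
        · exact mul_nonneg ha0 (sub_nonneg.2 (sin_le_one ψ))
        · linarith [mul_sin_le_sin_mul ha0 ha1 ⟨hψ.1, hψ.2.trans (half_le_self pi_pos.le)⟩]
    _ = (π / 2 - 1) * a ^ 2 := by
        rw [intervalIntegral.integral_const_mul, intervalIntegral.integral_sub (by simp)
          (continuous_sin.intervalIntegrable _ _), integral_sin]
        simp
        ring

lemma angularIntegral_le {A B : ℝ} (hA : 0 ≤ A) (hB : 0 < B) (hAB : A ≤ B) :
    angularIntegral A B ≤ 4 * B + 4 * (π / 2 - 1) * A ^ 2 / B := by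
  have hAB' : A = B * (A / B) := by field_simp
  have hquarter : ∫ φ in (0 : ℝ)..π / 2, max (A / B) (cos φ) ≤ 1 + (π / 2 - 1) * (A / B) ^ 2 := by
    calc ∫ φ in (0 : ℝ)..π / 2, max (A / B) (cos φ)
        = ∫ ψ in (0 : ℝ)..π / 2, (sin ψ + max 0 (A / B - sin ψ)) := by
          have := intervalIntegral.integral_comp_sub_left (a := 0) (b := π / 2)
            (fun ψ => max (A / B) (sin ψ)) (π / 2)
          simp only [sin_pi_div_two_sub, sub_self, sub_zero] at this
          rw [this]
          refine intervalIntegral.integral_congr fun ψ _ => ?_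
          grind
      _ ≤ 1 + (π / 2 - 1) * (A / B) ^ 2 := by
          rw [intervalIntegral.integral_add (continuous_sin.intervalIntegrable _ _)
            (Continuous.intervalIntegrable (by fun_prop) _ _), integral_sin, cos_zero,
            cos_pi_div_two, sub_zero]
          gcongr
          exact integral_max_sub_sin_le (by positivity) ((div_le_one hB).2 hAB)
  calc angularIntegral A B = B * angularIntegral (A / B) 1 := by
        rw [← angularIntegral_mul hB.le, ← hAB', mul_one]
    _ ≤ B * (4 * (1 + (π / 2 - 1) * (A / B) ^ 2)) := by
        simp only [angularIntegral, one_mul]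
        gcongr
    _ = 4 * B + 4 * (π / 2 - 1) * A ^ 2 / B := by field_simp

end AngularIntegral

section Cylindrical

variable {V : Type*} [NormedAddCommGroup V] [InnerProductSpace ℝ V]

lemma exists_orthonormalBasis_adapted [FiniteDimensional ℝ V] (hV : Module.finrank ℝ V = 3)
    {u : V} (hu : u ≠ 0) (T : V) :
    ∃ b : OrthonormalBasis (Fin 3) ℝ V, u = ‖u‖ • b 0 ∧ ⟪b 2, T⟫ = 0 := by
  have hcard : Module.finrank ℝ V = Fintype.card (Fin 3) := by rw [hV, Fintype.card_fin]
  let f : Fin 3 → V := ![u, T, 0]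
  have hb0 : InnerProductSpace.gramSchmidtNormed ℝ f 0 = (‖u‖ : ℝ)⁻¹ • u := by
    have : InnerProductSpace.gramSchmidt ℝ f 0 = f 0 := InnerProductSpace.gramSchmidt_bot ℝ f
    rw [InnerProductSpace.gramSchmidtNormed, this]
    rfl
  refine ⟨InnerProductSpace.gramSchmidtOrthonormalBasis hcard f, ?_,
    InnerProductSpace.gramSchmidtOrthonormalBasis_inv_triangular hcard f (i := 1) (j := 2)
      (by decide)⟩
  rw [InnerProductSpace.gramSchmidtOrthonormalBasis_apply hcard, hb0,
    smul_inv_smul₀ (norm_ne_zero_iff.2 hu)]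
  rw [hb0]
  exact smul_ne_zero (inv_ne_zero (norm_ne_zero_iff.2 hu)) hu

/-- The coordinates of `x` along `b 0` and in the plane of `b 1` and `b 2`, ready for polar
coordinates in that plane. -/
def axialCoords (b : OrthonormalBasis (Fin 3) ℝ V) (x : V) : ℝ × ℝ × ℝ :=
  (⟪b 0, x⟫, ⟪b 1, x⟫, ⟪b 2, x⟫)

lemma inner_eq_axialCoords (b : OrthonormalBasis (Fin 3) ℝ V) (x y : V) :
    ⟪x, y⟫ = ⟪b 0, y⟫ * (axialCoords b x).1 + ⟪b 1, y⟫ * (axialCoords b x).2.1 +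
      ⟪b 2, y⟫ * (axialCoords b x).2.2 := by
  rw [← b.sum_inner_mul_inner x y, Fin.sum_univ_three]
  simp only [axialCoords, real_inner_comm x, mul_comm]

lemma norm_sq_eq_axialCoords (b : OrthonormalBasis (Fin 3) ℝ V) (x : V) :
    ‖x‖ ^ 2 =
      (axialCoords b x).1 ^ 2 + ((axialCoords b x).2.1 ^ 2 + (axialCoords b x).2.2 ^ 2) := by
  rw [← real_inner_self_eq_norm_sq, inner_eq_axialCoords b]
  simp only [axialCoords]
  ring

lemma inner_eq_norm_mul_axialCoords {b : OrthonormalBasis (Fin 3) ℝ V} {u : V}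
    (hub : u = ‖u‖ • b 0) (x : V) : ⟪x, u⟫ = ‖u‖ * (axialCoords b x).1 := by
  rw [hub, inner_smul_right, real_inner_comm, ← hub]
  rfl

lemma inner_adapted_eq {b : OrthonormalBasis (Fin 3) ℝ V} {u T : V} (hu : 0 < ‖u‖)
    (hub : u = ‖u‖ • b 0) (hT : ⟪b 2, T⟫ = 0) :
    ⟪b 0, T⟫ = ⟪u, T⟫ / ‖u‖ ∧ |⟪b 1, T⟫| = √(‖u‖ ^ 2 * ‖T‖ ^ 2 - ⟪u, T⟫ ^ 2) / ‖u‖ := by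
  have h0 : ⟪b 0, T⟫ = ⟪u, T⟫ / ‖u‖ := by
    rw [eq_div_iff hu.ne', mul_comm, ← real_inner_smul_left, ← hub]
  refine ⟨h0, ?_⟩
  have hnorm := norm_sq_eq_axialCoords b T
  simp only [axialCoords, hT, h0] at hnorm
  rw [← sqrt_sq_eq_abs, ← sqrt_sq hu.le, ← sqrt_div' _ (sq_nonneg ‖u‖), sqrt_sq hu.le, hnorm]
  congr 1
  field_simp
  ring

variable [FiniteDimensional ℝ V] [MeasurableSpace V] [BorelSpace V]

lemma measurePreserving_axialCoords (b : OrthonormalBasis (Fin 3) ℝ V) :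
    MeasurePreserving (axialCoords b) := by
  have hsplit := ((MeasurePreserving.id (volume : Measure ℝ)).prod
    (volume_preserving_finTwoArrow ℝ)).comp (volume_preserving_piFinSuccAbove (fun _ => ℝ) 0)
  have hcoords : axialCoords b = (Prod.map id MeasurableEquiv.finTwoArrow ∘
      MeasurableEquiv.piFinSuccAbove (fun _ => ℝ) 0) ∘ WithLp.ofLp ∘ b.repr := by
    funext x
    simp only [axialCoords, ← b.repr_apply_apply]
    rfl
  rw [hcoords]
  exact hsplit.comp ((PiLp.volume_preserving_ofLp (Fin 3)).comp b.measurePreserving_repr)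

lemma lintegral_axialCoords (b : OrthonormalBasis (Fin 3) ℝ V) {F : ℝ × ℝ × ℝ → ℝ≥0∞}
    (hF : Measurable F) :
    ∫⁻ x : V, F (axialCoords b x) = ∫⁻ y, ∫⁻ s in Ioi (0 : ℝ), ∫⁻ φ in Ioo (-π) π,
      ENNReal.ofReal s * F (y, s * cos φ, s * sin φ) := by
  rw [(measurePreserving_axialCoords b).lintegral_comp hF, Measure.volume_eq_prod,
    lintegral_prod _ hF.aemeasurable]
  refine lintegral_congr fun y => ?_
  rw [← lintegral_comp_polarCoord_symm, polarCoord_target, Measure.volume_eq_prod,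
    setLIntegral_prod]
  · simp only [polarCoord_symm_apply, smul_eq_mul]
  · simp only [polarCoord_symm_apply, smul_eq_mul]
    fun_prop

lemma setLIntegral_ofReal_sq_mem_Icc_le {lo hi : ℝ} (h : lo ≤ hi) :
    ∫⁻ s in {s | 0 < s ∧ s ^ 2 ∈ Icc lo hi}, ENNReal.ofReal s ≤ ENNReal.ofReal ((hi - lo) / 2) := by
  have hsub : {s | 0 < s ∧ s ^ 2 ∈ Icc lo hi} ⊆ Icc √lo √hi := fun s ⟨hs, hlo, hhi⟩ =>
    ⟨sqrt_le_iff.2 ⟨hs.le, hlo⟩, le_sqrt_of_sq_le hhi⟩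
  have hle : √lo ≤ √hi := sqrt_le_sqrt h
  have hsq (x : ℝ) : √x ^ 2 = max x 0 := by
    rcases le_total 0 x with hx | hx
    · rw [sq_sqrt hx, max_eq_left hx]
    · rw [sqrt_eq_zero_of_nonpos hx, max_eq_right hx, zero_pow two_ne_zero]
  calc ∫⁻ s in {s | 0 < s ∧ s ^ 2 ∈ Icc lo hi}, ENNReal.ofReal s
      ≤ ∫⁻ s in Icc √lo √hi, ENNReal.ofReal s := lintegral_mono_set hsub
    _ = ENNReal.ofReal ((√hi ^ 2 - √lo ^ 2) / 2) := by
        rw [setLIntegral_congr Ioc_ae_eq_Icc.symm, ← ofReal_integral_eq_lintegral_ofReal,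
          ← intervalIntegral.integral_of_le hle, integral_id]
        · exact (continuous_id.intervalIntegrable (μ := volume) √lo √hi).1
        · filter_upwards [ae_restrict_mem measurableSet_Ioc] with s hs
          exact (sqrt_nonneg lo).trans hs.1.le
    _ ≤ ENNReal.ofReal ((hi - lo) / 2) := by
        rw [hsq, hsq]
        gcongr ENNReal.ofReal (?_ / 2)
        grind

lemma setLIntegral_shell_axialCoords (b : OrthonormalBasis (Fin 3) ℝ V) {R : ℝ} (hR : 0 ≤ R)
    {F : ℝ × ℝ × ℝ → ℝ≥0∞} (hF : Measurable F) :
    ∫⁻ x in shell V R, F (axialCoords b x) = ∫⁻ y,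
      ∫⁻ s in {s | 0 < s ∧ s ^ 2 ∈ Icc (1 - y ^ 2) (R ^ 2 - y ^ 2)}, ∫⁻ φ in Ioo (-π) π,
        ENNReal.ofReal s * F (y, s * cos φ, s * sin φ) := by
  set S : Set (ℝ × ℝ × ℝ) := {p | p.1 ^ 2 + (p.2.1 ^ 2 + p.2.2 ^ 2) ∈ Icc 1 (R ^ 2)}
  have hS : MeasurableSet S := measurableSet_Icc.preimage (by fun_prop)
  have hshell : shell V R = axialCoords b ⁻¹' S := by
    ext x
    rw [mem_preimage, shell, mem_ofPred_eq, mem_ofPred_eq, ← norm_sq_eq_axialCoords b, mem_Icc,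
      mem_Icc, one_le_sq_iff₀ (norm_nonneg x), sq_le_sq₀ (norm_nonneg x) hR]
  have hpolar (y s φ : ℝ) : (y, s * cos φ, s * sin φ) ∈ S ↔
      s ^ 2 ∈ Icc (1 - y ^ 2) (R ^ 2 - y ^ 2) := by
    have : y ^ 2 + ((s * cos φ) ^ 2 + (s * sin φ) ^ 2) = y ^ 2 + s ^ 2 := by
      linear_combination s ^ 2 * cos_sq_add_sin_sq φ
    rw [mem_ofPred_eq, this, mem_Icc, mem_Icc, sub_le_iff_le_add', le_sub_iff_add_le']
  have hrings (y : ℝ) : MeasurableSet {s : ℝ | s ^ 2 ∈ Icc (1 - y ^ 2) (R ^ 2 - y ^ 2)} :=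
    measurableSet_Icc.preimage (by fun_prop)
  have hind : (shell V R).indicator (fun x => F (axialCoords b x)) =
      fun x => S.indicator F (axialCoords b x) := by
    rw [hshell]
    exact funext fun _ => indicator_comp_right (axialCoords b) (g := F)
  rw [← lintegral_indicator (measurableSet_shell V R), hind,
    lintegral_axialCoords b (hF.indicator hS)]
  refine lintegral_congr fun y => ?_
  have : {s | 0 < s ∧ s ^ 2 ∈ Icc (1 - y ^ 2) (R ^ 2 - y ^ 2)} =
    {s | s ^ 2 ∈ Icc (1 - y ^ 2) (R ^ 2 - y ^ 2)} ∩ Ioi 0 := by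
    ext s
    exact and_comm
  rw [this, ← Measure.restrict_restrict (hrings y), ← lintegral_indicator (hrings y)]
  refine lintegral_congr fun s => ?_
  simp only [indicator_apply, hpolar, mem_ofPred_eq]
  split_ifs
  · rfl
  · simp only [mul_zero, lintegral_zero]

-- The section `⟪b 0, x⟫ = y` of the shell is an annulus of area at most `π (R² - 1)`, for all `y`.
lemma setLIntegral_shell_axialCoords_le (b : OrthonormalBasis (Fin 3) ℝ V) {R : ℝ} (hR : 1 ≤ R)
    {F : ℝ × ℝ × ℝ → ℝ≥0∞} (hF : Measurable F) {c : ℝ → ℝ≥0∞}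
    (hc : ∀ y s, 0 < s → s ^ 2 ≤ R ^ 2 - y ^ 2 →
      ∫⁻ φ in Ioo (-π) π, F (y, s * cos φ, s * sin φ) ≤ c y) :
    ∫⁻ x in shell V R, F (axialCoords b x) ≤
      ENNReal.ofReal ((R ^ 2 - 1) / 2) * ∫⁻ y in Icc (-R) R, c y := by
  set rings : ℝ → Set ℝ := fun y => {s | 0 < s ∧ s ^ 2 ∈ Icc (1 - y ^ 2) (R ^ 2 - y ^ 2)}
  have hempty (y : ℝ) (hy : y ∉ Icc (-R) R) : rings y = ∅ := by
    refine eq_empty_of_forall_notMem fun s hs => hy (abs_le.1 (abs_le_of_sq_le_sq ?_ ?_))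
    · linarith [hs.2.2, sq_nonneg s]
    · linarith
  have hrings (y : ℝ) : MeasurableSet (rings y) :=
    measurableSet_Ioi.inter (measurableSet_Icc.preimage (by fun_prop))
  have hslice (y : ℝ) : ∫⁻ s in rings y, ∫⁻ φ in Ioo (-π) π,
      ENNReal.ofReal s * F (y, s * cos φ, s * sin φ) ≤ ENNReal.ofReal ((R ^ 2 - 1) / 2) * c y := by
    calc ∫⁻ s in rings y, ∫⁻ φ in Ioo (-π) π, ENNReal.ofReal s * F (y, s * cos φ, s * sin φ)
        ≤ ∫⁻ s in rings y, ENNReal.ofReal s * c y := by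
          refine setLIntegral_mono' (hrings y) fun s hs => ?_
          rw [lintegral_const_mul _ (by fun_prop)]
          gcongr
          exact hc y s hs.1 hs.2.2
      _ ≤ ENNReal.ofReal ((R ^ 2 - 1) / 2) * c y := by
          rw [lintegral_mul_const _ (by fun_prop)]
          gcongr
          refine (setLIntegral_ofReal_sq_mem_Icc_le (by nlinarith)).trans_eq ?_
          ring_nf
  rw [setLIntegral_shell_axialCoords b (by linarith) hF,
    ← lintegral_const_mul' _ _ ENNReal.ofReal_ne_top, ← lintegral_indicator measurableSet_Icc]
  refine lintegral_mono fun y => ?_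
  by_cases hy : y ∈ Icc (-R) R
  · rw [indicator_of_mem hy]
    exact hslice y
  · change ∫⁻ s in rings y, _ ≤ _
    rw [hempty y hy, Measure.restrict_empty, lintegral_zero_measure]
    exact bot_le

end Cylindrical

section ShellEstimates

variable {w : ℝ → ℝ} {R : ℝ}

lemma volume_real_shell (hR : 1 ≤ R) : volume.real (shell E3 R) = 4 * π / 3 * (R ^ 3 - 1) := by
  have hshell : shell E3 R = Metric.closedBall 0 R \ Metric.ball 0 1 := by
    ext x
    simp [shell, and_comm]
  have hR0 : 0 ≤ R := zero_le_one.trans hR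
  rw [hshell, measureReal_sdiff (Metric.ball_subset_closedBall.trans
    (Metric.closedBall_subset_closedBall hR)) measurableSet_ball measure_closedBall_lt_top.ne]
  simp only [Measure.real, EuclideanSpace.volume_closedBall_fin_three,
    EuclideanSpace.volume_ball_fin_three, ENNReal.toReal_mul, ENNReal.toReal_pow,
    ENNReal.toReal_ofReal hR0, ENNReal.ofReal_one, ENNReal.toReal_one,
    ENNReal.toReal_ofReal (show 0 ≤ π * 4 / 3 by positivity)]
  ring

lemma IsWindow.lintegral_comp_mul_left {lo hi k : ℝ} (hw : IsWindow w lo hi) (hk : 0 < k) :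
    ∫⁻ y, ENNReal.ofReal (w (k * y)) = ENNReal.ofReal k⁻¹ := by
  rw [← ofReal_integral_eq_lintegral_ofReal (hw.integrable.comp_mul_left' hk.ne')
    (.of_forall fun y => hw.nonneg _), Measure.integral_comp_mul_left, hw.integral_eq_one,
    smul_eq_mul, mul_one, abs_of_pos (inv_pos.2 hk)]

/-- The window confines `y` to `[R / r, R² / r]`, and hence `s` to `[0, R² √(r² - 1) / r]`. -/
lemma lintegral_ofReal_window_le {r h δ k y s : ℝ} (hw : IsWindow w R (R ^ 2)) (hR : 1 ≤ R)
    (hr : 1 ≤ r) (hk : |k| = δ / r) (hs0 : 0 < s) (hs : s ^ 2 ≤ R ^ 2 - y ^ 2) :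
    ∫⁻ φ in Ioo (-π) π, ENNReal.ofReal (w (r * y) * |h / r * y + k * (s * cos φ)|) ≤
      ENNReal.ofReal (w (r * y)) *
        ENNReal.ofReal (R ^ 2 / r ^ 2 * angularIntegral |h| (√(r ^ 2 - 1) * δ)) := by
  have hr0 : 0 < r := zero_lt_one.trans_le hr
  by_cases hy : r * y ∈ Ioo R (R ^ 2)
  swap
  · simp [hw.eq_zero_of_notMem _ hy]
  have hy0 : R / r ≤ y := (div_le_iff₀' hr0).2 hy.1.le
  have hy1 : y ≤ R ^ 2 / r := (le_div_iff₀' hr0).2 hy.2.le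
  have hy_nonneg : 0 ≤ y := (by positivity : 0 ≤ R / r).trans hy0
  have hs1 : s ≤ R ^ 2 * √(r ^ 2 - 1) / r := by
    refine le_of_sq_le_sq ?_ (by positivity)
    calc s ^ 2 ≤ R ^ 2 - (R / r) ^ 2 := hs.trans (by gcongr)
      _ = 1 * (R ^ 2 * (r ^ 2 - 1) / r ^ 2) := by field_simp
      _ ≤ R ^ 2 * (R ^ 2 * (r ^ 2 - 1) / r ^ 2) := by
          gcongr
          · exact div_nonneg (mul_nonneg (sq_nonneg R) (by nlinarith)) (sq_nonneg r)
          · exact one_le_pow₀ hR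
      _ = (R ^ 2 * √(r ^ 2 - 1) / r) ^ 2 := by
          rw [div_pow, mul_pow, sq_sqrt (by nlinarith)]
          ring
  have hα : |h / r * y| ≤ R ^ 2 / r ^ 2 * |h| := by
    rw [abs_mul, abs_div, abs_of_pos hr0, abs_of_nonneg hy_nonneg]
    calc |h| / r * y ≤ |h| / r * (R ^ 2 / r) := by gcongr
      _ = R ^ 2 / r ^ 2 * |h| := by field_simp
  have hβ : |k * s| ≤ R ^ 2 / r ^ 2 * (√(r ^ 2 - 1) * δ) := by
    have hδ : 0 ≤ δ / r := hk ▸ abs_nonneg k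
    rw [abs_mul, hk, abs_of_pos hs0]
    calc δ / r * s ≤ δ / r * (R ^ 2 * √(r ^ 2 - 1) / r) := by gcongr
      _ = R ^ 2 / r ^ 2 * (√(r ^ 2 - 1) * δ) := by field_simp
  simp only [ENNReal.ofReal_mul (hw.nonneg _), ← mul_assoc k]
  rw [lintegral_const_mul _ (by fun_prop), ← angularIntegral_mul (by positivity)]
  gcongr
  exact lintegral_abs_add_mul_cos_le hα hβ

lemma setIntegral_shell_window_le (hw : IsWindow w R (R ^ 2)) (hR : 1 ≤ R) {u T : E3}
    (hu : 1 ≤ ‖u‖) (hT : ‖T‖ = 1) :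
    ∫ x in shell E3 R, w ⟪x, u⟫ * |⟪x, T⟫| ≤ (R ^ 2 - 1) / 2 * (R ^ 2 / ‖u‖ ^ 3) *
      angularIntegral |⟪u, T⟫| (√(‖u‖ ^ 2 - 1) * √(‖u‖ ^ 2 - ⟪u, T⟫ ^ 2)) := by
  have hr0 : 0 < ‖u‖ := zero_lt_one.trans_le hu
  have hJ := angularIntegral_nonneg (abs_nonneg ⟪u, T⟫)
    (√(‖u‖ ^ 2 - 1) * √(‖u‖ ^ 2 - ⟪u, T⟫ ^ 2))
  have hR2 : 0 ≤ R ^ 2 - 1 := by nlinarith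
  obtain ⟨b, hub, hT2⟩ := exists_orthonormalBasis_adapted (by simp) (norm_pos_iff.1 hr0) T
  obtain ⟨hT0, hT1⟩ := inner_adapted_eq hr0 hub hT2
  rw [hT, one_pow, mul_one] at hT1
  set F : ℝ × ℝ × ℝ → ℝ≥0∞ := fun p =>
    ENNReal.ofReal (w (‖u‖ * p.1) * |⟪u, T⟫ / ‖u‖ * p.1 + ⟪b 1, T⟫ * p.2.1|)
  have hF : Measurable F := by
    have := hw.continuous.measurable
    fun_prop
  have hint (x : E3) : ENNReal.ofReal (w ⟪x, u⟫ * |⟪x, T⟫|) = F (axialCoords b x) := by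
    simp only [F, inner_eq_norm_mul_axialCoords hub, inner_eq_axialCoords b x T, hT0, hT2,
      zero_mul, add_zero]
  rw [integral_eq_lintegral_of_nonneg_ae
    (.of_forall fun x => mul_nonneg (hw.nonneg _) (abs_nonneg _))
    (((hw.continuous.comp (by fun_prop)).mul (by fun_prop)).aestronglyMeasurable)]
  refine ENNReal.toReal_le_of_le_ofReal (by positivity) ?_
  simp only [hint]
  refine (setLIntegral_shell_axialCoords_le b hR hF fun y s hs0 hs =>
    lintegral_ofReal_window_le hw hR hu hT1 hs0 hs).trans ?_
  rw [lintegral_mul_const' _ _ ENNReal.ofReal_ne_top]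
  refine (mul_le_mul_right (mul_le_mul_left ((setLIntegral_le_lintegral _ _).trans_eq
    (hw.lintegral_comp_mul_left hr0)) _) _).trans_eq ?_
  rw [← ENNReal.ofReal_mul (by positivity), ← ENNReal.ofReal_mul (by positivity)]
  congr 1
  field_simp

lemma volume_real_shell_cap_le (hR : 1 ≤ R) {u : E3} (hu : 1 ≤ ‖u‖) :
    volume.real {x ∈ shell E3 R | R ≤ ⟪x, u⟫} ≤ π * (R ^ 2 - 1) * R * (1 - 1 / ‖u‖) := by
  set r := ‖u‖
  have hr0 : 0 < r := zero_lt_one.trans_le hu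
  have hR2 : 0 ≤ R ^ 2 - 1 := by nlinarith
  obtain ⟨b, hub, -⟩ := exists_orthonormalBasis_adapted (by simp) (norm_pos_iff.1 hr0) (0 : E3)
  set cap : Set (ℝ × ℝ × ℝ) := {p | R / r ≤ p.1}
  have hcap : MeasurableSet cap := measurableSet_Ici.preimage measurable_fst
  have hcoords : {x ∈ shell E3 R | R ≤ ⟪x, u⟫} = axialCoords b ⁻¹' cap ∩ shell E3 R := by
    ext x
    simp only [mem_ofPred_eq, mem_inter_iff, mem_preimage, cap, div_le_iff₀' hr0, and_comm,
      inner_eq_norm_mul_axialCoords hub]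
    rfl
  have hvol : volume {x ∈ shell E3 R | R ≤ ⟪x, u⟫} =
      ∫⁻ x in shell E3 R, cap.indicator 1 (axialCoords b x) := by
    have hmeas : MeasurableSet (axialCoords b ⁻¹' cap) :=
      (measurePreserving_axialCoords b).measurable hcap
    rw [hcoords, ← Measure.restrict_apply hmeas, ← lintegral_indicator_one hmeas]
    rfl
  have hslice (y s : ℝ) : ∫⁻ φ in Ioo (-π) π, cap.indicator 1 (y, s * cos φ, s * sin φ) ≤
      (Ici (R / r)).indicator (fun _ => ENNReal.ofReal (2 * π)) y := by
    by_cases hy : R / r ≤ y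
    · simp [cap, hy, two_mul]
    · simp [cap, hy]
  have hlength : ∫⁻ y in Icc (-R) R, (Ici (R / r)).indicator (fun _ => ENNReal.ofReal (2 * π)) y ≤
      ENNReal.ofReal (2 * π) * ENNReal.ofReal (R - R / r) := by
    rw [lintegral_indicator_const measurableSet_Ici, Measure.restrict_apply measurableSet_Ici,
      ← Real.volume_Icc]
    gcongr
    exact fun y hy => ⟨hy.1, hy.2.2⟩
  refine ENNReal.toReal_le_of_le_ofReal (by
    have : 1 / r ≤ 1 := (div_le_one hr0).2 hu
    have := sub_nonneg.2 this
    positivity) ?_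
  rw [hvol]
  refine (setLIntegral_shell_axialCoords_le b hR (measurable_one.indicator hcap)
    fun y s _ _ => hslice y s).trans ((mul_le_mul_right hlength _).trans_eq ?_)
  rw [← ENNReal.ofReal_mul (by positivity), ← ENNReal.ofReal_mul (by positivity)]
  congr 1
  field_simp

lemma integral_shellCrossing_le_of_affine {Γ : ℝ → E3} {hi : ℝ} (hw : IsWindow w R hi)
    (hR : 1 ≤ R) (hΓ : LipschitzWith 1 Γ) {a b : ℝ} (hab : a ≤ b) {T : E3}
    (haff : ∀ t ∈ Icc a b, Γ t = Γ a + (t - a) • T) {q : E3} (hq : 1 ≤ ‖q‖)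
    (h : ‖Γ a‖ ≤ 1 ∧ Γ b = q ∨ ‖Γ b‖ ≤ 1 ∧ Γ a = q) :
    ∫ t in a..b, shellCrossing w R Γ t ≤ π * (R ^ 2 - 1) * R * (1 - 1 / ‖q‖) := by
  set cap : Set E3 := {x | R ≤ ⟪x, q⟫}
  have hcap : MeasurableSet cap := measurableSet_le measurable_const (by fun_prop)
  have hlow {x p : E3} (hx : x ∈ shell E3 R) (hp : ‖p‖ ≤ 1) : ⟪x, p⟫ ≤ R :=
    (real_inner_le_norm x p).trans (by nlinarith [hx.1, hx.2, norm_nonneg p])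
  have hcross {x : E3} (hx : x ∈ shell E3 R) :
      ∫ t in a..b, crossingDensity w Γ x t ≤ cap.indicator 1 x := by
    rw [integral_crossingDensity_of_affine hw x hab haff]
    by_cases hxq : x ∈ cap
    · rw [indicator_of_mem hxq]
      exact hw.abs_integral_le_one _ _
    · have hxq' : ⟪x, q⟫ ≤ R := (not_le.1 hxq).le
      rw [indicator_of_notMem hxq, hw.integral_eq_zero_of_le, abs_zero] <;>
        rcases h with ⟨hp, rfl⟩ | ⟨hp, rfl⟩ <;> first | exact hxq' | exact hlow hx hp
  have : IsFiniteMeasure (volume.restrict (shell E3 R)) :=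
    ⟨by simpa using volume_shell_lt_top E3 R⟩
  calc ∫ t in a..b, shellCrossing w R Γ t
      = ∫ x in shell E3 R, ∫ t in a..b, crossingDensity w Γ x t :=
        integral_shellCrossing hw hΓ R hab
    _ ≤ ∫ x in shell E3 R, cap.indicator 1 x :=
        setIntegral_mono_on (integrableOn_integral_crossingDensity hw hΓ R hab)
          ((integrable_const 1).indicator hcap) (measurableSet_shell E3 R) fun x hx => hcross hx
    _ = volume.real {x ∈ shell E3 R | R ≤ ⟪x, q⟫} := by
        rw [integral_indicator_one hcap, measureReal_restrict_apply hcap, inter_comm]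
        rfl
    _ ≤ π * (R ^ 2 - 1) * R * (1 - 1 / ‖q‖) := volume_real_shell_cap_le hR hq

end ShellEstimates

section Profile

lemma hasDerivAt_max_zero_sq (x : ℝ) :
    HasDerivAt (fun y : ℝ => max 0 y ^ 2) (2 * max 0 x) x := by
  have hbound (y : ℝ) : ‖max 0 y ^ 2 - max 0 x ^ 2 - (y - x) • (2 * max 0 x)‖ ≤ ‖y - x‖ ^ 2 := by
    rw [Real.norm_eq_abs, Real.norm_eq_abs, sq_abs, smul_eq_mul, abs_le]
    rcases max_cases 0 x with ⟨hx, _⟩ | ⟨hx, _⟩ <;>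
      rcases max_cases 0 y with ⟨hy, _⟩ | ⟨hy, _⟩ <;> rw [hx, hy] <;> constructor <;> nlinarith
  exact hasDerivAt_iff_isLittleO.2 <| (Asymptotics.IsBigO.of_norm_le hbound).trans_isLittleO <|
    Asymptotics.isLittleO_pow_sub_sub x one_lt_two

/-- The profile `P` of the radial field `P (‖x‖ ^ 2) • x` of the calibration. Only its values
`23 / 20 * f⁻⁴` for `1 ≤ f` matter; for smaller `f` it is continued as a positive `C¹` function. -/
def radialProfile (f : ℝ) : ℝ := 23 / 20 / (f + max 0 (1 - f) ^ 2) ^ 4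

/-- The derivative of `radialProfile`. -/
def radialProfileDeriv (f : ℝ) : ℝ :=
  -(23 / 5) * (1 - 2 * max 0 (1 - f)) / (f + max 0 (1 - f) ^ 2) ^ 5

lemma add_max_zero_sq_pos (f : ℝ) : 0 < f + max 0 (1 - f) ^ 2 := by
  rcases max_cases 0 (1 - f) with ⟨h, _⟩ | ⟨h, _⟩ <;> rw [h] <;> nlinarith

lemma hasDerivAt_radialProfile (f : ℝ) :
    HasDerivAt radialProfile (radialProfileDeriv f) f := by
  have hpos := add_max_zero_sq_pos f
  have hmax : HasDerivAt (fun f : ℝ => max 0 (1 - f) ^ 2) (2 * max 0 (1 - f) * -1) f :=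
    (hasDerivAt_max_zero_sq (1 - f)).comp f ((hasDerivAt_id' f).const_sub 1)
  have hinv := (((hasDerivAt_id' f).fun_add hmax).fun_pow 4).fun_inv (pow_pos hpos 4).ne'
  refine (hinv.const_mul (23 / 20)).congr_deriv ?_
  simp only [radialProfileDeriv]
  field_simp
  ring

lemma continuous_radialProfileDeriv : Continuous radialProfileDeriv := by
  unfold radialProfileDeriv
  exact Continuous.div (by fun_prop) (by fun_prop)
    fun f => (pow_pos (add_max_zero_sq_pos f) 5).ne'

lemma radialProfile_nonneg (f : ℝ) : 0 ≤ radialProfile f :=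
  div_nonneg (by norm_num) (pow_pos (add_max_zero_sq_pos f) 4).le

lemma radialProfile_eq {f : ℝ} (hf : 1 ≤ f) : radialProfile f = 23 / 20 / f ^ 4 := by
  rw [radialProfile, max_eq_left (by linarith), zero_pow two_ne_zero, add_zero]

lemma radialProfileDeriv_eq {f : ℝ} (hf : 1 ≤ f) : radialProfileDeriv f = -(23 / 5) / f ^ 5 := by
  rw [radialProfileDeriv, max_eq_left (by linarith), mul_zero, sub_zero, mul_one,
    zero_pow two_ne_zero, add_zero]

end Profile

section Numerics

lemma pow_mul_pow_nonneg {p q : ℝ} (hp : 0 ≤ p) (hq : 0 ≤ q) (i j : ℕ) : 0 ≤ p ^ i * q ^ j :=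
  mul_nonneg (pow_nonneg hp i) (pow_nonneg hq j)

-- In the polynomial inequalities below, the difference of the two sides has nonnegative
-- coefficients in the Bernstein basis of each of the given subintervals.

lemma transverse_sq_le {u : ℝ} (h0 : 0 ≤ u) (h1 : u ≤ 1) :
    (4 * (10021 / 10000)) ^ 2 * (u * (1 - u)) ≤ (107 / 50 - 23 / 20 * u ^ 4) ^ 2 := by
  rcases le_total u (2 / 3) with hu | hu
  · have b := pow_mul_pow_nonneg h0 (sub_nonneg.2 hu)
    linarith [b 0 8, b 1 7, b 2 6, b 3 5, b 4 4, b 5 3, b 6 2, b 7 1, b 8 0]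
  · have b := pow_mul_pow_nonneg (sub_nonneg.2 hu) (sub_nonneg.2 h1)
    linarith [b 0 8, b 1 7, b 2 6, b 3 5, b 4 4, b 5 3, b 6 2, b 7 1, b 8 0]

lemma extremal_sq_le {u : ℝ} (h0 : 0 ≤ u) (h1 : u ≤ 1) :
    (4 * (10021 / 10000)) ^ 2 *
        ((1 - u) * (571 / 1000 * u + (3 / 4 * u + 1 / 3) * (1 + u) / 2) ^ 2) ≤
      (107 / 50 - 23 / 20 * u ^ 4 * (8 * u - 7)) ^ 2 := by
  have bernstein {lo hi : ℝ} (hlo : lo ≤ u) (hhi : u ≤ hi) :=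
    pow_mul_pow_nonneg (sub_nonneg.2 hlo) (sub_nonneg.2 hhi)
  rcases le_total u (1 / 2) with hu | hu
  · have b := bernstein h0 hu
    linarith [b 0 10, b 1 9, b 2 8, b 3 7, b 4 6, b 5 5, b 6 4, b 7 3, b 8 2, b 9 1, b 10 0]
  rcases le_total u (3 / 4) with hu' | hu'
  · have b := bernstein hu hu'
    linarith [b 0 10, b 1 9, b 2 8, b 3 7, b 4 6, b 5 5, b 6 4, b 7 3, b 8 2, b 9 1, b 10 0]
  · have b := bernstein hu' h1
    linarith [b 0 10, b 1 9, b 2 8, b 3 7, b 4 6, b 5 5, b 6 4, b 7 3, b 8 2, b 9 1, b 10 0]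

lemma oblique_chord_sq_le {s : ℝ} (h0 : 0 ≤ s) (h1 : s ≤ 1) :
    (62895 / 10000) ^ 2 * (s ^ 2 * (1 - s)) ≤ (107 / 50 - 23 / 20 * s ^ 8) ^ 2 * (1 + s) := by
  have b := pow_mul_pow_nonneg h0 (sub_nonneg.2 h1)
  linarith [b 0 17, b 1 16, b 2 15, b 3 14, b 4 13, b 5 12, b 6 11, b 7 10, b 8 9, b 9 8, b 10 7,
    b 11 6, b 12 5, b 13 4, b 14 3, b 15 2, b 16 1, b 17 0]

lemma radial_chord_le {s : ℝ} (h0 : 0 ≤ s) (h1 : s ≤ 1) :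
    19 / 20 * s + 62895 / 10000 * (s * (1 - s)) + 23 / 20 * s ^ 8 ≤ 107 / 50 := by
  rcases le_total s (2 / 3) with hs | hs
  · have b := pow_mul_pow_nonneg h0 (sub_nonneg.2 hs)
    linarith [b 0 8, b 1 7, b 2 6, b 3 5, b 4 4, b 5 3, b 6 2, b 7 1, b 8 0]
  · have b := pow_mul_pow_nonneg (sub_nonneg.2 hs) (sub_nonneg.2 h1)
    linarith [b 0 8, b 1 7, b 2 6, b 3 5, b 4 4, b 5 3, b 6 2, b 7 1, b 8 0]

lemma le_of_sq_le_sq_of_nonneg {p q : ℝ} (h : p ^ 2 ≤ q ^ 2) (hq : 0 ≤ q) : p ≤ q :=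
  (abs_le_of_sq_le_sq' h hq).2

variable {s c : ℝ}

lemma transverse_le (hs : 0 ≤ s) (hsc : s ^ 2 + c ^ 2 = 1) :
    4 * (10021 / 10000) * (c * s) + 23 / 20 * s ^ 8 ≤ 107 / 50 := by
  have hs1 : s ≤ 1 := by nlinarith [sq_nonneg c]
  have hsq := transverse_sq_le (sq_nonneg s) (pow_le_one₀ hs hs1)
  have : 4 * (10021 / 10000) * (c * s) ≤ 107 / 50 - 23 / 20 * (s ^ 2) ^ 4 := by
    refine le_of_sq_le_sq_of_nonneg (le_of_eq_of_le ?_ hsq) ?_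
    · rw [← hsc]; ring
    · linarith [pow_le_one₀ (n := 4) (sq_nonneg s) (pow_le_one₀ hs hs1)]
  linarith [pow_mul s 2 4]

lemma extremal_le (hs : 0 ≤ s) (hc : 0 ≤ c) (hsc : s ^ 2 + c ^ 2 = 1) :
    4 * (10021 / 10000) * (c * (571 / 1000 * s ^ 2 + s * (1 + s ^ 2) / 2)) +
      23 / 20 * s ^ 8 * (8 * s ^ 2 - 7) ≤ 107 / 50 := by
  have hs1 : s ≤ 1 := by nlinarith [sq_nonneg c]
  have hu1 : s ^ 2 ≤ 1 := pow_le_one₀ hs hs1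
  have hsq := extremal_sq_le (sq_nonneg s) hu1
  have htangent : s ≤ 3 / 4 * s ^ 2 + 1 / 3 := by nlinarith [sq_nonneg (s - 2 / 3)]
  have hroot : 4 * (10021 / 10000) *
      (c * (571 / 1000 * s ^ 2 + (3 / 4 * s ^ 2 + 1 / 3) * (1 + s ^ 2) / 2)) ≤
      107 / 50 - 23 / 20 * (s ^ 2) ^ 4 * (8 * s ^ 2 - 7) := by
    refine le_of_sq_le_sq_of_nonneg (le_of_eq_of_le ?_ hsq) ?_
    · rw [← hsc]; ring
    · have h4 : (s ^ 2) ^ 4 ≤ 1 := pow_le_one₀ (sq_nonneg s) hu1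
      nlinarith [pow_nonneg (sq_nonneg s) 4]
  calc 4 * (10021 / 10000) * (c * (571 / 1000 * s ^ 2 + s * (1 + s ^ 2) / 2)) +
        23 / 20 * s ^ 8 * (8 * s ^ 2 - 7)
      ≤ 4 * (10021 / 10000) *
          (c * (571 / 1000 * s ^ 2 + (3 / 4 * s ^ 2 + 1 / 3) * (1 + s ^ 2) / 2)) +
        23 / 20 * s ^ 8 * (8 * s ^ 2 - 7) := by gcongr
    _ ≤ 107 / 50 := by rw [← pow_mul] at hroot; linarith

end Numerics

section Pointwise

/-- The outer radius of the shell `shell E3 outerRadius` used in the calibration. -/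
def outerRadius : ℝ := 1001 / 1000

variable {r h : ℝ}

lemma angularIntegral_extremal_le {l : ℝ} (hr : 1 < r) (hl0 : 0 ≤ l) (hl1 : l ≤ 1)
    (hl : h ^ 2 = l * (r ^ 2 - 1)) :
    angularIntegral |h| (√(r ^ 2 - 1) * √(r ^ 2 - h ^ 2)) ≤
      4 * √(r ^ 2 - 1) * ((1 - l) * r + l * (571 / 1000 + (r + 1 / r) / 2)) := by
  have : 0 < r := by linarith
  have hn : 0 < r ^ 2 - 1 := by nlinarith
  set n := √(r ^ 2 - 1)
  set d := √(r ^ 2 - h ^ 2)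
  have hn0 : 0 < n := Real.sqrt_pos.2 hn
  have hnsq : n ^ 2 = r ^ 2 - 1 := Real.sq_sqrt hn.le
  have hh : |h| ≤ n := Real.abs_le_sqrt (by nlinarith)
  have hd1 : 1 ≤ d := Real.one_le_sqrt.2 (by nlinarith)
  have : 0 < d := one_pos.trans_le hd1
  have hdle : d ≤ (1 - l) * r + l * ((r + 1 / r) / 2) := by
    refine Real.sqrt_le_iff.2 ⟨by have := sub_nonneg.2 hl1; positivity, ?_⟩
    have : (1 - l) * r + l * ((r + 1 / r) / 2) = r - h ^ 2 / (2 * r) := by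
      rw [hl]; field_simp; ring
    rw [this]
    have : (r - h ^ 2 / (2 * r)) ^ 2 = r ^ 2 - h ^ 2 + (h ^ 2 / (2 * r)) ^ 2 := by
      field_simp; ring
    linarith [sq_nonneg (h ^ 2 / (2 * r))]
  have hpi : π / 2 - 1 ≤ 571 / 1000 := by linarith [Real.pi_lt_d4]
  calc angularIntegral |h| (n * d)
      ≤ 4 * (n * d) + 4 * (π / 2 - 1) * |h| ^ 2 / (n * d) :=
        angularIntegral_le (abs_nonneg h) (by positivity)
          (hh.trans (le_mul_of_one_le_right hn0.le hd1))
    _ = 4 * n * (d + (π / 2 - 1) * l / d) := by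
        rw [sq_abs, hl, ← hnsq]; field_simp
    _ ≤ 4 * n * (d + 571 / 1000 * l / 1) := by gcongr
    _ ≤ 4 * n * ((1 - l) * r + l * (571 / 1000 + (r + 1 / r) / 2)) :=
        mul_le_mul_of_nonneg_left (by linarith) (by positivity)

lemma crossing_add_radial_le (hr : 1 ≤ r) (hh : h ^ 2 ≤ r ^ 2 - 1) :
    outerRadius ^ 2 / r ^ 3 * angularIntegral |h| (√(r ^ 2 - 1) * √(r ^ 2 - h ^ 2)) +
      (radialProfile (r ^ 2) + 2 * radialProfileDeriv (r ^ 2) * h ^ 2) ≤ 107 / 50 := by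
  have hf : 1 ≤ r ^ 2 := one_le_pow₀ hr
  rw [radialProfile_eq hf, radialProfileDeriv_eq hf]
  rcases hr.eq_or_lt with rfl | hr
  · obtain rfl : h = 0 := by nlinarith
    norm_num [angularIntegral]
  have hn : 0 < r ^ 2 - 1 := by nlinarith
  obtain ⟨l, hl⟩ : ∃ l, h ^ 2 = l * (r ^ 2 - 1) := ⟨h ^ 2 / (r ^ 2 - 1), by field_simp⟩
  have hl0 : 0 ≤ l := nonneg_of_mul_nonneg_left (hl ▸ sq_nonneg h) hn
  have hl1 : l ≤ 1 := by nlinarith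
  have hnsq := Real.sq_sqrt hn.le
  have hang := angularIntegral_extremal_le hr hl0 hl1 hl
  set n := √(r ^ 2 - 1)
  have hsc : (1 / r) ^ 2 + (n / r) ^ 2 = 1 := by field_simp; linarith
  have htrans := transverse_le (by positivity) hsc
  have hext := extremal_le (by positivity) (by positivity) hsc
  calc outerRadius ^ 2 / r ^ 3 * angularIntegral |h| (n * √(r ^ 2 - h ^ 2)) +
        (23 / 20 / (r ^ 2) ^ 4 + 2 * (-(23 / 5) / (r ^ 2) ^ 5) * h ^ 2)
      ≤ 10021 / 10000 / r ^ 3 *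
          (4 * n * ((1 - l) * r + l * (571 / 1000 + (r + 1 / r) / 2))) +
        (23 / 20 / (r ^ 2) ^ 4 + 2 * (-(23 / 5) / (r ^ 2) ^ 5) * h ^ 2) := by
        gcongr
        · exact angularIntegral_nonneg (abs_nonneg h) _
        · norm_num [outerRadius]
    _ = (1 - l) * (4 * (10021 / 10000) * (n / r * (1 / r)) + 23 / 20 * (1 / r) ^ 8) +
        l * (4 * (10021 / 10000) * (n / r * (571 / 1000 * (1 / r) ^ 2 +
            1 / r * (1 + (1 / r) ^ 2) / 2)) + 23 / 20 * (1 / r) ^ 8 * (8 * (1 / r) ^ 2 - 7)) := by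
        rw [hl]; field_simp; ring
    _ ≤ (1 - l) * (107 / 50) + l * (107 / 50) := by
        have := sub_nonneg.2 hl1
        gcongr
    _ = 107 / 50 := by ring

lemma two_pi_mul_outerRadius_le : 2 * π * outerRadius ≤ 62895 / 10000 := by
  rw [outerRadius]; linarith [Real.pi_lt_d4]

lemma crossing_add_radial_le_of_oblique (hr : 1 ≤ r) (h0 : 0 ≤ h) (hh : r ^ 2 - 1 ≤ h ^ 2) :
    2 * π * outerRadius * (1 - 1 / r) + radialProfile (r ^ 2) * h ≤ 107 / 50 * h := by
  have hr0 : 0 < r := by linarith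
  have hs1 : 1 / r ≤ 1 := (div_le_one hr0).2 hr
  rw [radialProfile_eq (one_le_pow₀ hr)]
  have hsq := oblique_chord_sq_le (by positivity) hs1
  have hpow : (1 / r) ^ 8 ≤ 1 := pow_le_one₀ (by positivity) hs1
  have hcoef : 0 ≤ 107 / 50 - 23 / 20 * (1 / r) ^ 8 := by linarith
  have hroot : 62895 / 10000 * (1 - 1 / r) ≤ (107 / 50 - 23 / 20 * (1 / r) ^ 8) * h := by
    refine le_of_sq_le_sq_of_nonneg ?_ (mul_nonneg hcoef h0)
    calc (62895 / 10000 * (1 - 1 / r)) ^ 2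
        = (62895 / 10000) ^ 2 * ((1 / r) ^ 2 * (1 - 1 / r)) * (r ^ 2 * (1 - 1 / r)) := by
          field_simp
      _ ≤ (107 / 50 - 23 / 20 * (1 / r) ^ 8) ^ 2 * (1 + 1 / r) * (r ^ 2 * (1 - 1 / r)) := by
          have := sub_nonneg.2 hs1
          gcongr
      _ = (107 / 50 - 23 / 20 * (1 / r) ^ 8) ^ 2 * (r ^ 2 - 1) := by field_simp; ring
      _ ≤ ((107 / 50 - 23 / 20 * (1 / r) ^ 8) * h) ^ 2 := by rw [mul_pow]; gcongr
  have hcross := mul_le_mul_of_nonneg_right two_pi_mul_outerRadius_le (sub_nonneg.2 hs1)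
  have : 23 / 20 / (r ^ 2) ^ 4 = 23 / 20 * (1 / r) ^ 8 := by field_simp
  rw [this]
  linarith

lemma crossing_add_radial_le_of_radial (hr : 1 ≤ r) :
    2 * π * outerRadius * (1 - 1 / r) + radialProfile (r ^ 2) * r + 19 / 20 ≤ 107 / 50 * r := by
  have hr0 : 0 < r := by linarith
  have hs1 : 1 / r ≤ 1 := (div_le_one hr0).2 hr
  rw [radialProfile_eq (one_le_pow₀ hr)]
  have hpoly := mul_le_mul_of_nonneg_right
    (radial_chord_le (by positivity) hs1) hr0.le
  have hcross := mul_le_mul_of_nonneg_right two_pi_mul_outerRadius_le (sub_nonneg.2 hs1)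
  have : (19 / 20 * (1 / r) + 62895 / 10000 * (1 / r * (1 - 1 / r)) + 23 / 20 * (1 / r) ^ 8) * r =
      19 / 20 + 62895 / 10000 * (1 - 1 / r) + 23 / 20 / (r ^ 2) ^ 4 * r := by
    field_simp
  linarith

end Pointwise

section Chords

namespace IsChord

variable {V : Type*} [NormedAddCommGroup V] [InnerProductSpace ℝ V]
variable {Γ : ℝ → V} {x y : ℝ} {T : V} (hc : IsChord Γ x y T)
include hc

lemma eq_add_smul_of_mem {s t : ℝ} (hs : s ∈ Icc x y) (ht : t ∈ Icc x y) :
    Γ t = Γ s + (t - s) • T := by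
  rw [hc.eq_add_smul t ht, hc.eq_add_smul s hs, add_assoc, ← add_smul]
  ring_nf

lemma hasDerivAt {t : ℝ} (ht : t ∈ Ioo x y) : HasDerivAt Γ T t := by
  have hline : HasDerivAt (fun s => Γ x + (s - x) • T) T t := by
    simpa using (((hasDerivAt_id t).sub_const x).smul_const T).const_add (Γ x)
  refine hline.congr_of_eventuallyEq ?_
  filter_upwards [Icc_mem_nhds ht.1 ht.2] with s hs using hc.eq_add_smul s hs

lemma inner_eq {t : ℝ} (ht : t ∈ Icc x y) : ⟪Γ t, T⟫ = ⟪Γ x, T⟫ + (t - x) := by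
  rw [hc.eq_add_smul t ht, inner_add_left, real_inner_smul_left, real_inner_self_eq_norm_sq,
    hc.norm_eq_one, one_pow, mul_one]

lemma norm_sq_eq {t : ℝ} (ht : t ∈ Icc x y) :
    ‖Γ t‖ ^ 2 = ‖Γ x‖ ^ 2 - ⟪Γ x, T⟫ ^ 2 + ⟪Γ t, T⟫ ^ 2 := by
  rw [hc.inner_eq ht, hc.eq_add_smul t ht, norm_add_sq_real, real_inner_smul_right, norm_smul,
    hc.norm_eq_one, mul_one, Real.norm_eq_abs, sq_abs]
  ring

lemma integral_radial_eq {P P' : ℝ → ℝ} (hP : ∀ f, HasDerivAt P (P' f) f)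
    (hint : IntervalIntegrable
      (fun t => P (‖Γ t‖ ^ 2) + 2 * P' (‖Γ t‖ ^ 2) * ⟪Γ t, deriv Γ t⟫ ^ 2) volume x y) :
    ∫ t in x..y, (P (‖Γ t‖ ^ 2) + 2 * P' (‖Γ t‖ ^ 2) * ⟪Γ t, deriv Γ t⟫ ^ 2) =
      P (‖Γ y‖ ^ 2) * ⟪Γ y, T⟫ - P (‖Γ x‖ ^ 2) * ⟪Γ x, T⟫ := by
  have hP_cont : Continuous P := continuous_iff_continuousAt.2 fun f => (hP f).continuousAt
  have hΓ_cont : ContinuousOn Γ (Icc x y) :=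
    ContinuousOn.congr (by fun_prop) hc.eq_add_smul
  refine intervalIntegral.integral_eq_sub_of_hasDerivAt_of_le
    (f := fun t => P (‖Γ t‖ ^ 2) * ⟪Γ t, T⟫) hc.lt.le ?_ (fun t ht => ?_) hint
  · exact (hP_cont.comp_continuousOn (hΓ_cont.norm.pow 2)).mul
      (hΓ_cont.inner continuousOn_const)
  · have hd := hc.hasDerivAt ht
    have hinner := hd.inner ℝ (hasDerivAt_const t T)
    refine (((hP _).comp t hd.norm_sq).mul hinner).congr_deriv ?_
    simp only [Function.comp_apply, hd.deriv, inner_zero_right, zero_add,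
      real_inner_self_eq_norm_sq, hc.norm_eq_one]
    ring

end IsChord

end Chords

section Calibration

/-- The weight of the crossing term of the calibration: the reciprocal of the volume of
`shell E3 outerRadius`, up to the factor `4 * π`. -/
def crossingWeight : ℝ := 3 / (outerRadius ^ 3 - 1)

/-- The defect of the calibration at time `t`: the constant `107 / 50`, minus the rate at which
random planes are crossed, minus the rate of first variation along the radial field
`radialProfile (‖x‖ ^ 2) • x`. -/
def defect (w : ℝ → ℝ) (Γ : ℝ → E3) (t : ℝ) : ℝ :=
  107 / 50 - crossingWeight * shellCrossing w outerRadius Γ t -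
    (radialProfile (‖Γ t‖ ^ 2) + 2 * radialProfileDeriv (‖Γ t‖ ^ 2) * ⟪Γ t, deriv Γ t⟫ ^ 2)

lemma crossingWeight_pos : 0 < crossingWeight := by norm_num [crossingWeight, outerRadius]

lemma crossingWeight_mul_volume :
    crossingWeight * (2 * volume.real (shell E3 outerRadius)) = 8 * π := by
  rw [volume_real_shell (by norm_num [outerRadius]), crossingWeight]
  have : outerRadius ^ 3 - 1 ≠ 0 := by norm_num [outerRadius]
  field_simp
  ring

lemma crossingWeight_mul_le : crossingWeight * (outerRadius ^ 2 - 1) ≤ 2 := by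
  norm_num [crossingWeight, outerRadius]

variable {w : ℝ → ℝ} {Γ : ℝ → E3}

lemma defect_nonneg (hw : IsWindow w outerRadius (outerRadius ^ 2)) {t : ℝ}
    (hv : ‖deriv Γ t‖ = 1) (hr : 1 ≤ ‖Γ t‖) (hh : ⟪Γ t, deriv Γ t⟫ ^ 2 ≤ ‖Γ t‖ ^ 2 - 1) :
    0 ≤ defect w Γ t := by
  set J := angularIntegral |⟪Γ t, deriv Γ t⟫|
    (√(‖Γ t‖ ^ 2 - 1) * √(‖Γ t‖ ^ 2 - ⟪Γ t, deriv Γ t⟫ ^ 2))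
  have hJ : 0 ≤ J := angularIntegral_nonneg (abs_nonneg _) _
  have hcross : crossingWeight * shellCrossing w outerRadius Γ t ≤
      outerRadius ^ 2 / ‖Γ t‖ ^ 3 * J :=
    calc crossingWeight * shellCrossing w outerRadius Γ t
        ≤ crossingWeight * ((outerRadius ^ 2 - 1) / 2 * (outerRadius ^ 2 / ‖Γ t‖ ^ 3) * J) :=
          mul_le_mul_of_nonneg_left
            (setIntegral_shell_window_le hw (by norm_num [outerRadius]) hr hv)
            crossingWeight_pos.le
      _ = crossingWeight * (outerRadius ^ 2 - 1) / 2 * (outerRadius ^ 2 / ‖Γ t‖ ^ 3 * J) := by ring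
      _ ≤ outerRadius ^ 2 / ‖Γ t‖ ^ 3 * J :=
          mul_le_of_le_one_left (by positivity) (by linarith [crossingWeight_mul_le])
  rw [defect]
  linarith [crossing_add_radial_le hr hh]

lemma integral_defect_chord_nonneg_of_one_le (hw : IsWindow w outerRadius (outerRadius ^ 2))
    {x y : ℝ} {T : E3} (hc : IsChord Γ x y T) (hdist : 1 ≤ ‖Γ x‖ ^ 2 - ⟪Γ x, T⟫ ^ 2) :
    0 ≤ ∫ t in x..y, defect w Γ t := by
  rw [intervalIntegral.integral_of_le hc.lt.le, integral_Ioc_eq_integral_Ioo]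
  refine setIntegral_nonneg measurableSet_Ioo fun t ht => ?_
  have hd := (hc.hasDerivAt ht).deriv
  have hsq := hc.norm_sq_eq (Ioo_subset_Icc_self ht)
  refine defect_nonneg hw (hd ▸ hc.norm_eq_one) ?_ (by rw [hd]; linarith)
  exact (one_le_sq_iff₀ (norm_nonneg _)).1 (by nlinarith)

lemma crossingWeight_mul_integral_shellCrossing_le
    (hw : IsWindow w outerRadius (outerRadius ^ 2)) (hΓ : LipschitzWith 1 Γ) {T : E3} {a b : ℝ}
    (hab : a ≤ b) (haff : ∀ t ∈ Icc a b, Γ t = Γ a + (t - a) • T) {q : E3} (hq : 1 ≤ ‖q‖)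
    (h : ‖Γ a‖ ≤ 1 ∧ Γ b = q ∨ ‖Γ b‖ ≤ 1 ∧ Γ a = q) :
    crossingWeight * ∫ t in a..b, shellCrossing w outerRadius Γ t ≤
      2 * π * outerRadius * (1 - 1 / ‖q‖) := by
  have hq' : 0 ≤ 1 - 1 / ‖q‖ := sub_nonneg.2 (div_le_one_of_le₀ hq (norm_nonneg q))
  have hR : 0 ≤ outerRadius := by norm_num [outerRadius]
  calc crossingWeight * ∫ t in a..b, shellCrossing w outerRadius Γ t
      ≤ crossingWeight * (π * (outerRadius ^ 2 - 1) * outerRadius * (1 - 1 / ‖q‖)) :=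
        mul_le_mul_of_nonneg_left (integral_shellCrossing_le_of_affine hw
          (by norm_num [outerRadius]) hΓ hab haff hq h) crossingWeight_pos.le
    _ = crossingWeight * (outerRadius ^ 2 - 1) * (π * outerRadius * (1 - 1 / ‖q‖)) := by ring
    _ ≤ 2 * (π * outerRadius * (1 - 1 / ‖q‖)) := by gcongr; exact crossingWeight_mul_le
    _ = 2 * π * outerRadius * (1 - 1 / ‖q‖) := by ring

namespace IsShortestLoop

variable {L σ : ℝ} (hΓ : IsShortestLoop Γ L σ) (hw : IsWindow w outerRadius (outerRadius ^ 2))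
include hΓ hw

lemma intervalIntegrable_shellCrossing (a b : ℝ) :
    IntervalIntegrable (shellCrossing w outerRadius Γ) volume a b :=
  ⟨integrableOn_shellCrossing hw hΓ.lipschitz _ a b,
    integrableOn_shellCrossing hw hΓ.lipschitz _ b a⟩

lemma intervalIntegrable_defect (a b : ℝ) : IntervalIntegrable (defect w Γ) volume a b :=
  (intervalIntegrable_const.sub
    ((hΓ.intervalIntegrable_shellCrossing hw a b).const_mul crossingWeight)).sub
    (hΓ.intervalIntegrable_radial hasDerivAt_radialProfile continuous_radialProfileDeriv a b)

lemma integral_defect (a b : ℝ) :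
    ∫ t in a..b, defect w Γ t =
      107 / 50 * (b - a) - crossingWeight * (∫ t in a..b, shellCrossing w outerRadius Γ t) -
        ∫ t in a..b, (radialProfile (‖Γ t‖ ^ 2) +
          2 * radialProfileDeriv (‖Γ t‖ ^ 2) * ⟪Γ t, deriv Γ t⟫ ^ 2) := by
  have hcross := (hΓ.intervalIntegrable_shellCrossing hw a b).const_mul crossingWeight
  unfold defect
  rw [intervalIntegral.integral_sub (intervalIntegrable_const.sub hcross)
      (hΓ.intervalIntegrable_radial hasDerivAt_radialProfile continuous_radialProfileDeriv a b),
    intervalIntegral.integral_sub intervalIntegrable_const hcross,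
    intervalIntegral.integral_const_mul, intervalIntegral.integral_const, smul_eq_mul,
    mul_comm (b - a)]

variable {x y : ℝ} {T : E3} (hc : IsChord Γ x y T)
include hc

lemma le_integral_defect_chord (hdist : ‖Γ x‖ ^ 2 - ⟪Γ x, T⟫ ^ 2 < 1) :
    107 / 50 * -⟪Γ x, T⟫ - radialProfile (‖Γ x‖ ^ 2) * -⟪Γ x, T⟫ -
        2 * π * outerRadius * (1 - 1 / ‖Γ x‖) +
      (107 / 50 * ⟪Γ y, T⟫ - radialProfile (‖Γ y‖ ^ 2) * ⟪Γ y, T⟫ -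
        2 * π * outerRadius * (1 - 1 / ‖Γ y‖)) ≤ ∫ t in x..y, defect w Γ t := by
  obtain ⟨hneg, hpos⟩ := hΓ.inner_neg_and_pos_of_isChord hc hdist
  set z := x - ⟪Γ x, T⟫ with hz
  have hxz : x ≤ z := by linarith
  have hzy : z ≤ y := by linarith
  have hfoot : ‖Γ z‖ ≤ 1 := by
    rw [← sq_le_one_iff₀ (norm_nonneg _), hc.norm_sq_eq ⟨hxz, hzy⟩, hc.inner_eq ⟨hxz, hzy⟩, hz]
    linarith [sq_nonneg (⟪Γ x, T⟫ + (x - ⟪Γ x, T⟫ - x))]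
  have hleft := crossingWeight_mul_integral_shellCrossing_le hw hΓ.lipschitz hxz
    (fun t ht => hc.eq_add_smul t ⟨ht.1, ht.2.trans hzy⟩) (hΓ.one_le_norm hc.left_mem)
    (.inr ⟨hfoot, rfl⟩)
  have hright := crossingWeight_mul_integral_shellCrossing_le hw hΓ.lipschitz hzy
    (fun t ht => hc.eq_add_smul_of_mem ⟨hxz, hzy⟩ ⟨hxz.trans ht.1, ht.2⟩)
    (hΓ.one_le_norm hc.right_mem) (.inl ⟨hfoot, rfl⟩)
  rw [hΓ.integral_defect hw, hc.integral_radial_eq hasDerivAt_radialProfile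
      (hΓ.intervalIntegrable_radial hasDerivAt_radialProfile continuous_radialProfileDeriv x y),
    ← intervalIntegral.integral_add_adjacent_intervals
      (hΓ.intervalIntegrable_shellCrossing hw x z) (hΓ.intervalIntegrable_shellCrossing hw z y)]
  linarith [hc.inner_eq (right_mem_Icc.2 hc.lt.le)]

lemma integral_defect_chord_nonneg : 0 ≤ ∫ t in x..y, defect w Γ t := by
  rcases le_or_gt 1 (‖Γ x‖ ^ 2 - ⟪Γ x, T⟫ ^ 2) with hdist | hdist
  · exact integral_defect_chord_nonneg_of_one_le hw hc hdist
  obtain ⟨hneg, hpos⟩ := hΓ.inner_neg_and_pos_of_isChord hc hdist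
  have hy := right_mem_Icc.2 hc.lt.le
  rw [← hc.inner_eq hy] at hpos
  have hleft := crossing_add_radial_le_of_oblique (hΓ.one_le_norm hc.left_mem)
    (neg_nonneg.2 hneg.le) (by linarith [neg_sq ⟪Γ x, T⟫])
  have hright := crossing_add_radial_le_of_oblique (hΓ.one_le_norm hc.right_mem) hpos.le
    (by linarith [hc.norm_sq_eq hy])
  linarith [hΓ.le_integral_defect_chord hw hc hdist]

lemma le_integral_defect_chord_of_radial (hdist : ‖Γ x‖ ^ 2 - ⟪Γ x, T⟫ ^ 2 = 0) :
    19 / 10 ≤ ∫ t in x..y, defect w Γ t := by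
  have hlt : ‖Γ x‖ ^ 2 - ⟪Γ x, T⟫ ^ 2 < 1 := hdist.trans_lt one_pos
  obtain ⟨hneg, hpos⟩ := hΓ.inner_neg_and_pos_of_isChord hc hlt
  have hy := right_mem_Icc.2 hc.lt.le
  rw [← hc.inner_eq hy] at hpos
  have hx_eq : ‖Γ x‖ = -⟪Γ x, T⟫ := by
    rw [← abs_of_neg hneg, ← abs_norm, ← sq_eq_sq_iff_abs_eq_abs]; linarith
  have hy_eq : ‖Γ y‖ = ⟪Γ y, T⟫ := by
    rw [← abs_of_pos hpos, ← abs_norm, ← sq_eq_sq_iff_abs_eq_abs]; linarith [hc.norm_sq_eq hy]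
  have hleft := crossing_add_radial_le_of_radial (hΓ.one_le_norm hc.left_mem)
  have hright := crossing_add_radial_le_of_radial (hΓ.one_le_norm hc.right_mem)
  have := hΓ.le_integral_defect_chord hw hc hlt
  rw [← hx_eq, ← hy_eq] at this
  linarith

omit hc in
lemma exists_chord_integral_defect_le {t₀ : ℝ} (ht₀ : t₀ ∉ extremalTimes Γ) :
    ∃ a x y T, IsChord Γ x y T ∧ (∃ t ∈ Icc x y, Γ t = Γ t₀) ∧
      ∫ t in x..y, defect w Γ t ≤ ∫ t in a..a + L, defect w Γ t := by
  obtain ⟨a, ha⟩ := hΓ.extremalTimes_nonempty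
  have haL : a + L ∈ extremalTimes Γ := by simpa using hΓ.add_int_mul_mem_extremalTimes 1 ha
  obtain ⟨k, hk⟩ := hΓ.exists_add_int_mul_mem_Ioc a t₀
  have hk' : t₀ + k * L ∉ extremalTimes Γ := fun h => ht₀ <| by
    simpa using hΓ.add_int_mul_mem_extremalTimes (-k) h
  obtain ⟨x, y, hgap, hmem, hax, hyb⟩ := exists_isGap (isClosed_extremalTimes hΓ.continuous) ha haL
    (Ioc_subset_Icc_self hk) hk'
  obtain ⟨T, hc⟩ := hΓ.isChord_of_isGap hgap
  refine ⟨a, x, y, T, hc, ⟨_, Ioo_subset_Icc_self hmem, hΓ.apply_add_int_mul k t₀⟩, ?_⟩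
  refine intervalIntegral_gap_le (isClosed_extremalTimes hΓ.continuous) ha haL
    (hΓ.intervalIntegrable_defect hw a (a + L)).1 ?_ (fun x y h => ?_) hgap hax hyb
  · filter_upwards [hΓ.norm_deriv_eq_one a] with t hv ht
    have hdiff : DifferentiableAt ℝ Γ t := by
      by_contra hd
      simp [deriv_zero_of_not_differentiableAt hd] at hv
    exact defect_nonneg hw hv (hΓ.one_le_norm ht)
      (hΓ.sq_inner_deriv_le ht hdiff.hasDerivAt hv.le)
  · obtain ⟨T, hc⟩ := hΓ.isChord_of_isGap h
    exact hΓ.integral_defect_chord_nonneg hw hc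

omit hw hc in
theorem apply_ne_zero (hσ : outerRadius ^ 2 ≤ σ) (hL : L ≤ 4 * π * outerRadius ^ 2) (t₀ : ℝ) :
    Γ t₀ ≠ 0 := by
  intro h0
  obtain ⟨w, hw⟩ := exists_isWindow (lo := outerRadius) (hi := outerRadius ^ 2)
    (by norm_num [outerRadius])
  have ht₀ : t₀ ∉ extremalTimes Γ := fun h =>
    absurd (hΓ.one_le_norm h) (by norm_num [h0])
  obtain ⟨a, x, y, T, hc, ⟨t, ht, hΓt⟩, hle⟩ := hΓ.exists_chord_integral_defect_le hw ht₀
  have hdist : ‖Γ x‖ ^ 2 - ⟪Γ x, T⟫ ^ 2 = 0 := by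
    simpa [hΓt, h0, eq_comm] using hc.norm_sq_eq ht
  have hchord := hΓ.le_integral_defect_chord_of_radial hw hc hdist
  have hcross := mul_le_mul_of_nonneg_left (hΓ.two_mul_volume_shell_le hw
    (by norm_num [outerRadius]) hσ h0 outerRadius a) crossingWeight_pos.le
  have hradial := hΓ.integral_radial_nonneg hasDerivAt_radialProfile continuous_radialProfileDeriv
    radialProfile_nonneg a
  rw [crossingWeight_mul_volume] at hcross
  rw [hΓ.integral_defect hw a, add_sub_cancel_left] at hle
  norm_num [outerRadius] at hL
  linarith [Real.pi_lt_d4]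

end IsShortestLoop

end Calibration

section Comparison

lemma eVariationOn_const_smul_le {α F : Type*} [LinearOrder α] [NormedAddCommGroup F]
    [NormedSpace ℝ F] (c : ℝ) (β : α → F) (s : Set α) :
    eVariationOn (fun t => c • β t) s ≤ ‖c‖₊ * eVariationOn β s :=
  ((lipschitzWith_smul c).lipschitzOnWith (s := univ)).comp_eVariationOn_le (mapsTo_univ _ _)

variable {a b : ℝ} {γ : ℝ → E3}

lemma IsInspection.exists_le_inner (h : IsInspection a b γ) (n : E3) :
    ∃ s ∈ Icc a b, ‖n‖ ≤ ⟪n, γ s⟫ := by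
  obtain ⟨hab, hc, -, -, hs⟩ := h
  simpa using exists_le_inner_of_sphere_subset_convexHull
    (isCompact_Icc.image_of_continuousOn hc) ((nonempty_Icc.2 hab.le).image γ) zero_le_one hs n

lemma IsMinimalInspection.ofReal_mul_eVariationOn_le (hmin : IsMinimalInspection a b γ) {σ c d : ℝ}
    {β : ℝ → E3} (hσ : 0 < σ) (hcd : c < d) (hc : ContinuousOn β (Icc c d)) (hcl : β c = β d)
    (hs : ∀ n : E3, ∃ s ∈ Icc c d, σ * ‖n‖ ≤ ⟪n, β s⟫) :
    ENNReal.ofReal σ * eVariationOn γ (Icc a b) ≤ eVariationOn β (Icc c d) := by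
  rcases eq_or_ne (eVariationOn β (Icc c d)) ⊤ with htop | hfin
  · exact htop ▸ le_top
  have hσβ : ContinuousOn (fun t => σ⁻¹ • β t) (Icc c d) := hc.const_smul σ⁻¹
  have hscale := eVariationOn_const_smul_le σ⁻¹ β (Icc c d)
  have hinsp : IsInspection c d fun t => σ⁻¹ • β t := by
    refine ⟨hcd, hσβ, congrArg (σ⁻¹ • ·) hcl,
      ne_top_of_le_ne_top (ENNReal.mul_ne_top ENNReal.coe_ne_top hfin) hscale,
      Metric.sphere_subset_closedBall.trans <| closedBall_subset_convexHull
        (isCompact_Icc.image_of_continuousOn hσβ) fun n => ?_⟩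
    obtain ⟨s, hs, hns⟩ := hs n
    refine ⟨_, mem_image_of_mem _ hs, ?_⟩
    rwa [inner_smul_right, one_mul, ← div_eq_inv_mul, le_div_iff₀' hσ]
  calc ENNReal.ofReal σ * eVariationOn γ (Icc a b)
      ≤ ENNReal.ofReal σ * (‖σ⁻¹‖₊ * eVariationOn β (Icc c d)) := by
        gcongr
        exact (hmin.2 _ _ _ hinsp).trans hscale
    _ = eVariationOn β (Icc c d) := by
        rw [← mul_assoc, ← enorm_eq_nnnorm, Real.enorm_of_nonneg (inv_pos.2 hσ).le,
          ← ENNReal.ofReal_mul hσ.le, mul_inv_cancel₀ hσ.ne', ENNReal.ofReal_one, one_mul]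

end Comparison

section BaseballSeam

lemma sin_sub_sq_add_cos_sub_sq_le (s t : ℝ) :
    (sin s - sin t) ^ 2 + (cos s - cos t) ^ 2 ≤ (s - t) ^ 2 :=
  calc (sin s - sin t) ^ 2 + (cos s - cos t) ^ 2 = 2 - 2 * cos (s - t) := by
        rw [cos_sub]
        linear_combination sin_sq_add_cos_sq s + sin_sq_add_cos_sq t
    _ ≤ (s - t) ^ 2 := by linarith [one_sub_sq_div_two_le_cos (x := s - t)]

lemma exists_mul_sin_sub_mul_cos_eq {p : ℝ} (hp : 0 ≤ p) (q : ℝ) :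
    ∃ u ∈ Icc 0 π, p * sin u - q * cos u = √(p ^ 2 + q ^ 2) := by
  set z : ℂ := ⟨-q, p⟩
  have hz : ‖z‖ ^ 2 = p ^ 2 + q ^ 2 := by
    rw [Complex.sq_norm, Complex.normSq_mk]
    ring
  have hsin : ‖z‖ * sin z.arg = p := Complex.norm_mul_sin_arg z
  have hcos : ‖z‖ * cos z.arg = -q := Complex.norm_mul_cos_arg z
  refine ⟨z.arg, ⟨Complex.arg_nonneg_iff.2 hp, Complex.arg_le_pi z⟩, ?_⟩
  rw [← hz, sqrt_sq (norm_nonneg z)]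
  linear_combination -sin z.arg * hsin - cos z.arg * hcos + ‖z‖ * sin_sq_add_cos_sq z.arg

/-- The baseball seam: a closed curve of four unit semicircles, one on each of the faces `z = ±1`
and `y = ±1` of the cube `[-1, 1]³`. It is an inspection curve of length `4π`. -/
def baseballSeam (t : ℝ) : E3 :=
  if t ≤ π then !₂[sin t, -cos t, 1]
  else if t ≤ 2 * π then !₂[sin t, 1, -cos t]
  else if t ≤ 3 * π then !₂[sin t, cos t, -1]
  else !₂[sin t, -1, cos t]

lemma cos_three_mul_pi : cos (3 * π) = -1 := by
  rw [show 3 * π = π + 2 * π by ring, cos_add_two_pi, cos_pi]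

lemma baseballSeam_apply_of_le_pi {t : ℝ} (ht : t ≤ π) :
    baseballSeam t = !₂[sin t, -cos t, 1] := if_pos ht

lemma baseballSeam_apply_of_mem_Icc_pi_two_pi {t : ℝ} (ht : t ∈ Icc π (2 * π)) :
    baseballSeam t = !₂[sin t, 1, -cos t] := by
  rcases ht.1.eq_or_lt with rfl | h
  · simp [baseballSeam]
  · rw [baseballSeam, if_neg h.not_ge, if_pos ht.2]

lemma baseballSeam_apply_of_mem_Icc_two_pi_three_pi {t : ℝ} (ht : t ∈ Icc (2 * π) (3 * π)) :
    baseballSeam t = !₂[sin t, cos t, -1] := by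
  have hπ := pi_pos
  rcases ht.1.eq_or_lt with rfl | h
  · rw [baseballSeam_apply_of_mem_Icc_pi_two_pi ⟨by linarith, le_rfl⟩, cos_two_pi]
  · rw [baseballSeam, if_neg (by linarith), if_neg h.not_ge, if_pos ht.2]

lemma baseballSeam_apply_of_three_pi_le {t : ℝ} (ht : 3 * π ≤ t) :
    baseballSeam t = !₂[sin t, -1, cos t] := by
  have hπ := pi_pos
  rcases ht.eq_or_lt with rfl | h
  · rw [baseballSeam_apply_of_mem_Icc_two_pi_three_pi ⟨by linarith, le_rfl⟩, cos_three_mul_pi]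
  · rw [baseballSeam, if_neg (by linarith), if_neg (by linarith), if_neg h.not_ge]

lemma continuous_baseballSeam : Continuous baseballSeam := by
  have hπ := pi_pos
  unfold baseballSeam
  refine .if_le (by fun_prop) (.if_le (by fun_prop) (.if_le (by fun_prop) (by fun_prop)
    continuous_id continuous_const ?_) continuous_id continuous_const ?_)
    continuous_id continuous_const ?_
  · rintro _ rfl
    rw [cos_three_mul_pi]
  · rintro _ rfl
    rw [if_pos (by linarith), cos_two_pi]
  · rintro _ rfl
    rw [if_pos (by linarith), cos_pi, neg_neg]

lemma baseballSeam_zero_eq : baseballSeam 0 = baseballSeam (4 * π) := by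
  have hπ := pi_pos
  rw [baseballSeam_apply_of_le_pi hπ.le, baseballSeam_apply_of_three_pi_le (by linarith),
    show 4 * π = 2 * π + 2 * π by ring]
  simp

lemma dist_mk_sq_eq (x y z x' y' z' : ℝ) :
    dist (!₂[x, y, z] : E3) !₂[x', y', z'] ^ 2 = (x - x') ^ 2 + (y - y') ^ 2 + (z - z') ^ 2 := by
  simp [EuclideanSpace.dist_sq_eq, Fin.sum_univ_three, Real.dist_eq]

lemma eVariationOn_baseballSeam_arc_le {u v : ℝ} {f : ℝ → E3} (hf : EqOn baseballSeam f (Icc u v))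
    (hdist : ∀ s t, dist (f s) (f t) ^ 2 = (sin s - sin t) ^ 2 + (cos s - cos t) ^ 2) :
    eVariationOn baseballSeam (Icc u v) ≤ ENNReal.ofReal (v - u) := by
  have hlip : LipschitzWith 1 f := LipschitzWith.of_dist_le_mul fun s t => by
    rw [NNReal.coe_one, one_mul, Real.dist_eq]
    refine abs_le_of_sq_le_sq' ?_ (abs_nonneg _) |>.2
    rw [hdist, sq_abs]
    exact sin_sub_sq_add_cos_sub_sq_le s t
  rw [eVariationOn.eq_of_eqOn hf]
  simpa using eVariationOn_Icc_le_of_lipschitzOnWith (hlip.lipschitzOnWith (s := Icc u v))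

lemma eVariationOn_baseballSeam_le :
    eVariationOn baseballSeam (Icc 0 (4 * π)) ≤ ENNReal.ofReal (4 * π) := by
  have hπ := pi_pos
  have hsplit {x y z : ℝ} (hxy : x ≤ y) (hyz : y ≤ z) : eVariationOn baseballSeam (Icc x z) =
      eVariationOn baseballSeam (Icc x y) + eVariationOn baseballSeam (Icc y z) := by
    simpa using (eVariationOn.Icc_add_Icc baseballSeam (s := univ) hxy hyz (mem_univ y)).symm
  have h₁ := eVariationOn_baseballSeam_arc_le (u := 0)
    (fun t ht => baseballSeam_apply_of_le_pi ht.2)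
    fun s t => by rw [dist_mk_sq_eq]; ring
  have h₂ := eVariationOn_baseballSeam_arc_le
    (fun t ht => baseballSeam_apply_of_mem_Icc_pi_two_pi ht)
    fun s t => by rw [dist_mk_sq_eq]; ring
  have h₃ := eVariationOn_baseballSeam_arc_le
    (fun t ht => baseballSeam_apply_of_mem_Icc_two_pi_three_pi ht)
    fun s t => by rw [dist_mk_sq_eq]; ring
  have h₄ := eVariationOn_baseballSeam_arc_le (v := 4 * π)
    (fun t ht => baseballSeam_apply_of_three_pi_le ht.1)
    fun s t => by rw [dist_mk_sq_eq]; ring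
  rw [hsplit (y := π), hsplit (x := π) (y := 2 * π), hsplit (x := 2 * π) (y := 3 * π)]
  · refine (add_le_add h₁ (add_le_add h₂ (add_le_add h₃ h₄))).trans_eq ?_
    rw [← ENNReal.ofReal_add, ← ENNReal.ofReal_add, ← ENNReal.ofReal_add] <;> ring_nf <;> positivity
  all_goals linarith

lemma norm_le_sqrt_add_abs {n : E3} {x y z : ℝ}
    (h : n 0 ^ 2 + n 1 ^ 2 + n 2 ^ 2 = x ^ 2 + y ^ 2 + z ^ 2) : ‖n‖ ≤ √(x ^ 2 + y ^ 2) + |z| := by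
  rw [EuclideanSpace.norm_eq, Fin.sum_univ_three]
  simp only [Real.norm_eq_abs, sq_abs]
  refine sqrt_le_iff.2 ⟨by positivity, ?_⟩
  have hsqrt : √(x ^ 2 + y ^ 2) ^ 2 = x ^ 2 + y ^ 2 := sq_sqrt (by positivity)
  have hcross : 0 ≤ √(x ^ 2 + y ^ 2) * |z| := by positivity
  linarith [sq_abs z, add_sq (√(x ^ 2 + y ^ 2)) |z|]

lemma inner_mk_eq (n : E3) (x y z : ℝ) : ⟪n, !₂[x, y, z]⟫ = n 0 * x + n 1 * y + n 2 * z := by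
  simp [PiLp.inner_apply, Fin.sum_univ_three, mul_comm]

lemma exists_norm_le_inner_baseballSeam (n : E3) :
    ∃ s ∈ Icc 0 (4 * π), ‖n‖ ≤ ⟪n, baseballSeam s⟫ := by
  have hπ := pi_pos
  rcases le_total 0 (n 0) with h0 | h0
  · obtain ⟨u, hu, hval⟩ := exists_mul_sin_sub_mul_cos_eq h0 (n 1)
    have hn := norm_le_sqrt_add_abs (n := n) rfl
    rw [← hval] at hn
    rcases le_total 0 (n 2) with h2 | h2
    · refine ⟨u, ⟨hu.1, by linarith [hu.2]⟩, ?_⟩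
      rw [baseballSeam_apply_of_le_pi hu.2, inner_mk_eq]
      rw [abs_of_nonneg h2] at hn
      linarith
    · refine ⟨π - u + 2 * π, ⟨by linarith [hu.2], by linarith [hu.1]⟩, ?_⟩
      rw [baseballSeam_apply_of_mem_Icc_two_pi_three_pi ⟨by linarith [hu.2], by linarith [hu.1]⟩,
        inner_mk_eq, sin_add_two_pi, cos_add_two_pi, sin_pi_sub, cos_pi_sub]
      rw [abs_of_nonpos h2] at hn
      linarith
  · obtain ⟨u, hu, hval⟩ := exists_mul_sin_sub_mul_cos_eq (neg_nonneg.2 h0) (n 2)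
    have hn := norm_le_sqrt_add_abs (n := n) (x := -n 0) (y := n 2) (z := n 1) (by ring)
    rw [← hval] at hn
    rcases le_total 0 (n 1) with h1 | h1
    · refine ⟨2 * π - u, ⟨by linarith [hu.2], by linarith [hu.1]⟩, ?_⟩
      rw [baseballSeam_apply_of_mem_Icc_pi_two_pi ⟨by linarith [hu.2], by linarith [hu.1]⟩,
        inner_mk_eq, sin_two_pi_sub, cos_two_pi_sub]
      rw [abs_of_nonneg h1] at hn
      linarith
    · refine ⟨u + π + 2 * π, ⟨by linarith [hu.1], by linarith [hu.2]⟩, ?_⟩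
      rw [baseballSeam_apply_of_three_pi_le (by linarith [hu.1]), inner_mk_eq, sin_add_two_pi,
        cos_add_two_pi, sin_add_pi, cos_add_pi]
      rw [abs_of_nonpos h1] at hn
      linarith

lemma IsMinimalInspection.eVariationOn_le {a b : ℝ} {γ : ℝ → E3}
    (hmin : IsMinimalInspection a b γ) : eVariationOn γ (Icc a b) ≤ ENNReal.ofReal (4 * π) := by
  have h := hmin.ofReal_mul_eVariationOn_le one_pos (by positivity)
    continuous_baseballSeam.continuousOn baseballSeam_zero_eq
    (by simpa only [one_mul] using exists_norm_le_inner_baseballSeam)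
  rw [ENNReal.ofReal_one, one_mul] at h
  exact h.trans eVariationOn_baseballSeam_le

end BaseballSeam

section Normalisation

lemma lipschitzWith_comp_fract {E : Type*} [PseudoMetricSpace E] {K : ℝ≥0} {g : ℝ → E}
    (hg : LipschitzOnWith K g (Icc 0 1)) (h01 : g 0 = g 1) :
    LipschitzWith K fun x => g (Int.fract x) := by
  refine LipschitzWith.of_dist_le_mul fun x y => ?_
  wlog hxy : x ≤ y generalizing x y
  · rw [dist_comm, dist_comm x]
    exact this y x (le_of_not_ge hxy)
  have hfract (z : ℝ) : Int.fract z ∈ Icc 0 1 := ⟨Int.fract_nonneg z, (Int.fract_lt_one z).le⟩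
  rcases (Int.floor_mono hxy).eq_or_lt with hfloor | hfloor
  · have hdist : dist (Int.fract x) (Int.fract y) = dist x y := by
      rw [Int.fract, Int.fract, hfloor, dist_sub_right]
    exact (hg.dist_le_mul _ (hfract x) _ (hfract y)).trans_eq (by rw [hdist])
  · have hfloor' : (⌊x⌋ : ℝ) + 1 ≤ ⌊y⌋ := by exact_mod_cast hfloor
    have hx := hg.dist_le_mul _ (hfract x) 1 (right_mem_Icc.2 zero_le_one)
    have hy := hg.dist_le_mul 0 (left_mem_Icc.2 zero_le_one) _ (hfract y)
    rw [Real.dist_eq, abs_sub_comm, abs_of_nonneg (sub_nonneg.2 (hfract _).2)] at hx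
    rw [Real.dist_eq, abs_sub_comm, abs_of_nonneg (sub_nonneg.2 (hfract _).1), h01] at hy
    rw [Real.dist_eq, abs_sub_comm, abs_of_nonneg (sub_nonneg.2 hxy)]
    calc dist (g (Int.fract x)) (g (Int.fract y))
        ≤ K * (1 - Int.fract x) + K * (Int.fract y - 0) :=
          (dist_triangle _ (g 1) _).trans (add_le_add hx hy)
      _ = K * (1 - Int.fract x + Int.fract y) := by ring
      _ ≤ K * (y - x) := mul_le_mul_of_nonneg_left
          (by linarith [Int.floor_add_fract x, Int.floor_add_fract y]) K.2

variable {a b : ℝ} {C : ℝ≥0}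

section ConstantSpeed

variable {E : Type*} [PseudoMetricSpace E] {γ : ℝ → E}

lemma lipschitzOnWith_of_hasConstantSpeedOnWith {s : Set ℝ} (hs : HasConstantSpeedOnWith γ s C) :
    LipschitzOnWith C γ s := by
  refine LipschitzOnWith.of_dist_le_mul fun x hx y hy => ?_
  wlog hxy : x ≤ y generalizing x y
  · rw [dist_comm, dist_comm x]
    exact this y hy x hx (le_of_not_ge hxy)
  have hle := eVariationOn.edist_le γ (s := s ∩ Icc x y) ⟨hx, le_rfl, hxy⟩ ⟨hy, hxy, le_rfl⟩
  rw [hs hx hy, edist_dist] at hle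
  rw [Real.dist_eq, abs_sub_comm, abs_of_nonneg (sub_nonneg.2 hxy)]
  exact (ENNReal.ofReal_le_ofReal_iff (mul_nonneg C.2 (sub_nonneg.2 hxy))).1 hle

lemma eVariationOn_Icc_of_hasConstantSpeedOnWith (hs : HasConstantSpeedOnWith γ (Icc a b) C)
    {s t : ℝ} (hst : s ≤ t) (has : a ≤ s) (htb : t ≤ b) :
    eVariationOn γ (Icc s t) = ENNReal.ofReal (C * (t - s)) := by
  simpa only [inter_eq_right.2 (Icc_subset_Icc has htb)]
    using hs (x := s) ⟨has, hst.trans htb⟩ (y := t) ⟨has.trans hst, htb⟩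

end ConstantSpeed

variable {V : Type*} [NormedAddCommGroup V] [NormedSpace ℝ V] {γ : ℝ → V}

/-- The `L`-periodic extension of the dilate by `σ` of a closed curve `γ` on `[a, b]`, after the
affine change of parameter taking `[a, b]` to `[0, L]`. -/
def periodicDilate (a b L σ : ℝ) (γ : ℝ → V) (s : ℝ) : V :=
  σ • γ (a + (b - a) * Int.fract (s / L))

lemma periodic_periodicDilate {L : ℝ} (hL : L ≠ 0) (σ : ℝ) :
    Function.Periodic (periodicDilate a b L σ γ) L := fun s => by
  rw [periodicDilate, add_div, div_self hL, Int.fract_add_one, periodicDilate]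

lemma periodicDilate_apply (hab : a < b) (hcl : γ a = γ b) {L : ℝ} (hL : L ≠ 0) (σ : ℝ) {t : ℝ}
    (ht : t ∈ Icc a b) : periodicDilate a b L σ γ (L / (b - a) * (t - a)) = σ • γ t := by
  have hba : b - a ≠ 0 := (sub_pos.2 hab).ne'
  rw [periodicDilate, div_mul_eq_mul_div, div_right_comm, mul_div_cancel_left₀ _ hL]
  rcases ht.2.eq_or_lt with rfl | htb
  · simp [div_self hba, hcl]
  · rw [Int.fract_eq_self.2 ⟨div_nonneg (sub_nonneg.2 ht.1) (sub_pos.2 hab).le,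
      (div_lt_one (sub_pos.2 hab)).2 (by linarith)⟩, mul_div_cancel₀ _ hba, add_sub_cancel]

lemma lipschitzWith_periodicDilate (hs : LipschitzOnWith C γ (Icc a b)) (hab : a < b)
    (hcl : γ a = γ b) {σ L : ℝ} (hσ : 0 ≤ σ) (hL : σ * (C * (b - a)) = L) (hL0 : 0 < L) :
    LipschitzWith 1 (periodicDilate a b L σ γ) := by
  have hba : 0 ≤ b - a := (sub_pos.2 hab).le
  have hmem {u : ℝ} (hu : u ∈ Icc 0 1) : a + (b - a) * u ∈ Icc a b :=
    ⟨by linarith [mul_nonneg hba hu.1], by linarith [mul_le_of_le_one_right hba hu.2]⟩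
  have hone : LipschitzOnWith L.toNNReal (fun u => σ • γ (a + (b - a) * u)) (Icc 0 1) := by
    refine LipschitzOnWith.of_dist_le_mul fun u hu v hv => ?_
    calc dist (σ • γ (a + (b - a) * u)) (σ • γ (a + (b - a) * v))
        ≤ σ * (C * dist (a + (b - a) * u) (a + (b - a) * v)) := by
          rw [dist_smul₀, norm_of_nonneg hσ]
          exact mul_le_mul_of_nonneg_left (hs.dist_le_mul _ (hmem hu) _ (hmem hv)) hσ
      _ = L.toNNReal * dist u v := by
          rw [coe_toNNReal _ hL0.le, dist_add_left, Real.dist_eq, ← mul_sub, abs_mul,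
            abs_of_nonneg hba, ← hL, Real.dist_eq]
          ring
  refine LipschitzWith.of_dist_le_mul fun s t => ?_
  refine ((lipschitzWith_comp_fract hone (by simp [hcl])).dist_le_mul (s / L) (t / L)).trans_eq ?_
  rw [coe_toNNReal _ hL0.le, Real.dist_eq, ← sub_div, abs_div, abs_of_pos hL0, Real.dist_eq,
    NNReal.coe_one, one_mul, mul_div_cancel₀ _ hL0.ne']

end Normalisation

section Independence

variable {a b : ℝ} {γ : ℝ → E3} {C : ℝ≥0}

lemma IsInspection.speed_pos (h : IsInspection a b γ)
    (hs : HasConstantSpeedOnWith γ (Icc a b) C) : 0 < C := by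
  refine pos_iff_ne_zero.2 fun hC => ?_
  subst hC
  set n : E3 := EuclideanSpace.single 0 1
  have hn : ‖n‖ = 1 := by simp [n]
  obtain ⟨s, hs', hns⟩ := h.exists_le_inner n
  obtain ⟨t, ht', hnt⟩ := h.exists_le_inner (-n)
  have hst : γ s = γ t := dist_le_zero.1 <| by
    simpa using (lipschitzOnWith_of_hasConstantSpeedOnWith hs).dist_le_mul s hs' t ht'
  rw [hst] at hns
  rw [inner_neg_left, norm_neg] at hnt
  linarith

lemma IsMinimalInspection.isShortestLoop_periodicDilate (hmin : IsMinimalInspection a b γ)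
    (hs : HasConstantSpeedOnWith γ (Icc a b) C) {σ : ℝ} (hσ : 1 ≤ σ) :
    IsShortestLoop (periodicDilate a b (σ * (C * (b - a))) σ γ) (σ * (C * (b - a))) σ := by
  obtain ⟨hab, -, hcl, -, -⟩ := hmin.1
  have hσ0 : 0 < σ := one_pos.trans_le hσ
  have hL : 0 < σ * (C * (b - a)) :=
    mul_pos hσ0 (mul_pos (hmin.1.speed_pos hs) (sub_pos.2 hab))
  refine ⟨lipschitzWith_periodicDilate (lipschitzOnWith_of_hasConstantSpeedOnWith hs) hab hcl
    hσ0.le rfl hL, periodic_periodicDilate hL.ne' σ, hL, hσ, fun n => ?_,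
    fun c d β hcd hβ hβcl hβs => ?_⟩
  · obtain ⟨t, ht, hnt⟩ := hmin.1.exists_le_inner n
    refine ⟨σ * (C * (b - a)) / (b - a) * (t - a), ?_⟩
    rw [periodicDilate_apply hab hcl hL.ne' σ ht, inner_smul_right]
    exact mul_le_mul_of_nonneg_left hnt hσ0.le
  · have hle := hmin.ofReal_mul_eVariationOn_le hσ0 hcd hβ hβcl hβs
    rwa [eVariationOn_Icc_of_hasConstantSpeedOnWith hs hab.le le_rfl le_rfl,
      ← ENNReal.ofReal_mul hσ0.le] at hle

lemma IsMinimalInspection.exists_isShortestLoop (hmin : IsMinimalInspection a b γ)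
    (hs : HasConstantSpeedOnWith γ (Icc a b) C) :
    ∃ (Γ : ℝ → E3) (L σ : ℝ), IsShortestLoop Γ L σ ∧ (∀ t, Γ t ≠ 0) ∧
      ∀ t ∈ Icc a b, Γ (L / (b - a) * (t - a)) = σ • γ t := by
  have hΓ := hmin.isShortestLoop_periodicDilate hs (σ := outerRadius ^ 2)
    (by norm_num [outerRadius])
  have hlength : C * (b - a) ≤ 4 * π := by
    have hle := hmin.eVariationOn_le
    rw [eVariationOn_Icc_of_hasConstantSpeedOnWith hs hmin.1.1.le le_rfl le_rfl] at hle
    exact (ENNReal.ofReal_le_ofReal_iff (by positivity)).1 hle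
  refine ⟨_, _, _, hΓ, hΓ.apply_ne_zero le_rfl ?_,
    fun t ht => periodicDilate_apply hmin.1.1 hmin.1.2.2.1 hΓ.period_pos.ne' _ ht⟩
  linarith [mul_le_mul_of_nonneg_left hlength (sq_nonneg outerRadius)]

lemma IsMinimalInspection.apply_ne_zero (hmin : IsMinimalInspection a b γ)
    (hs : HasConstantSpeedOnWith γ (Icc a b) C) {t : ℝ} (ht : t ∈ Icc a b) : γ t ≠ 0 := by
  obtain ⟨Γ, L, σ, -, hne, hΓγ⟩ := hmin.exists_isShortestLoop hs
  exact fun h0 => hne _ (by rw [hΓγ t ht, h0, smul_zero])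

lemma IsShortestLoop.exists_isChord_of_notMem {V : Type*} [NormedAddCommGroup V]
    [InnerProductSpace ℝ V] [FiniteDimensional ℝ V] [Nontrivial V] {Γ : ℝ → V} {L σ : ℝ}
    (hΓ : IsShortestLoop Γ L σ) {t : ℝ} (ht : t ∉ extremalTimes Γ) :
    ∃ x y T, IsChord Γ x y T ∧ t ∈ Ioo x y := by
  obtain ⟨s, hs⟩ := hΓ.extremalTimes_nonempty
  obtain ⟨k, hk⟩ := hΓ.exists_add_int_mul_mem_Ioc t s
  obtain ⟨x, y, hgap, htxy, -, -⟩ := exists_isGap (isClosed_extremalTimes hΓ.continuous)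
    (a := s + (k - 1 : ℤ) * L) (b := s + k * L) (t := t) (hΓ.add_int_mul_mem_extremalTimes _ hs)
    (hΓ.add_int_mul_mem_extremalTimes _ hs) ⟨by push_cast; linarith [hk.2], hk.1.le⟩ ht
  obtain ⟨T, hc⟩ := hΓ.isChord_of_isGap hgap
  exact ⟨x, y, T, hc, htxy⟩

lemma IsShortestLoop.sq_inner_deriv_lt {V : Type*} [NormedAddCommGroup V] [InnerProductSpace ℝ V]
    [FiniteDimensional ℝ V] {Γ : ℝ → V} {L σ : ℝ} (hΓ : IsShortestLoop Γ L σ)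
    (hne : ∀ t, Γ t ≠ 0) {t : ℝ} {v : V} (hd : HasDerivAt Γ v t) (hv : ‖v‖ = 1) :
    ⟪Γ t, v⟫ ^ 2 < ‖Γ t‖ ^ 2 * ‖v‖ ^ 2 := by
  have : Nontrivial V := ⟨Γ t, 0, hne t⟩
  rw [hv, one_pow, mul_one]
  by_cases ht : t ∈ extremalTimes Γ
  · linarith [hΓ.sq_inner_deriv_le ht hd hv.le]
  obtain ⟨x, y, T, hc, ht⟩ := hΓ.exists_isChord_of_notMem ht
  obtain rfl : v = T := hd.unique (hc.hasDerivAt ht)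
  suffices 0 < ‖Γ x‖ ^ 2 - ⟪Γ x, v⟫ ^ 2 by
    linarith [hc.norm_sq_eq (Ioo_subset_Icc_self ht)]
  by_contra! hle
  obtain ⟨hneg, hpos⟩ := hΓ.inner_neg_and_pos_of_isChord hc (hle.trans_lt one_pos)
  refine hne (x - ⟪Γ x, v⟫) ?_
  rw [hc.eq_add_smul _ ⟨by linarith, by linarith⟩, ← norm_eq_zero, ← sq_eq_zero_iff]
  refine le_antisymm (le_of_eq_of_le ?_ hle) (sq_nonneg _)
  rw [sub_sub_cancel_left, neg_smul, ← sub_eq_add_neg, norm_sub_inner_smul_sq hv]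

lemma ae_comp_mul_sub {p : ℝ → Prop} (h : ∀ᵐ x, p x) {k : ℝ} (hk : k ≠ 0) (a : ℝ) :
    ∀ᵐ t, p (k * (t - a)) := by
  have hmul : ∀ᵐ x, p (k * x) := by
    rw [ae_iff] at h ⊢
    simpa [h] using Real.volume_preimage_mul_left hk {x | ¬ p x}
  exact (measurePreserving_sub_right volume a).quasiMeasurePreserving.ae hmul

lemma sq_inner_smul_smul_lt {V : Type*} [NormedAddCommGroup V] [InnerProductSpace ℝ V] {u v : V}
    (h : ⟪u, v⟫ ^ 2 < ‖u‖ ^ 2 * ‖v‖ ^ 2) {c d : ℝ} (hc : c ≠ 0) (hd : d ≠ 0) :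
    ⟪c • u, d • v⟫ ^ 2 < ‖c • u‖ ^ 2 * ‖d • v‖ ^ 2 := by
  have hcd : 0 < (c * d) ^ 2 := by positivity
  calc ⟪c • u, d • v⟫ ^ 2 = (c * d) ^ 2 * ⟪u, v⟫ ^ 2 := by
        rw [inner_smul_left, inner_smul_right, conj_trivial]
        ring
    _ < (c * d) ^ 2 * (‖u‖ ^ 2 * ‖v‖ ^ 2) := mul_lt_mul_of_pos_left h hcd
    _ = ‖c • u‖ ^ 2 * ‖d • v‖ ^ 2 := by
        simp only [norm_smul, mul_pow, norm_eq_abs, sq_abs]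
        ring

lemma IsMinimalInspection.ae_exists_hasDerivAt_sq_inner_lt (hmin : IsMinimalInspection a b γ)
    (hs : HasConstantSpeedOnWith γ (Icc a b) C) :
    ∀ᵐ t ∂volume.restrict (Icc a b),
      ∃ v, HasDerivAt γ v t ∧ ⟪γ t, v⟫ ^ 2 < ‖γ t‖ ^ 2 * ‖v‖ ^ 2 := by
  obtain ⟨Γ, L, σ, hΓ, hne, hΓγ⟩ := hmin.exists_isShortestLoop hs
  have hba : 0 < b - a := sub_pos.2 hmin.1.1
  have hσ : σ ≠ 0 := (one_pos.trans_le hΓ.one_le).ne'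
  set k := L / (b - a)
  have hk : 0 < k := div_pos hΓ.period_pos hba
  have hγ {t : ℝ} (ht : t ∈ Icc a b) : γ t = σ⁻¹ • Γ (k * (t - a)) := by
    rw [hΓγ t ht, inv_smul_smul₀ hσ]
  have hunit := ae_comp_mul_sub ((ae_restrict_iff' measurableSet_Ioc).1 (hΓ.norm_deriv_eq_one 0))
    hk.ne' a
  rw [← Measure.restrict_congr_set Ioo_ae_eq_Icc, ae_restrict_iff' measurableSet_Ioo]
  filter_upwards [hunit] with t ht htab
  have hv : ‖deriv Γ (k * (t - a))‖ = 1 := by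
    refine ht ⟨mul_pos hk (sub_pos.2 htab.1), ?_⟩
    rw [zero_add, ← div_mul_cancel₀ L hba.ne']
    exact mul_le_mul_of_nonneg_left (sub_le_sub_right htab.2.le a) hk.le
  have hd : HasDerivAt Γ (deriv Γ (k * (t - a))) (k * (t - a)) :=
    (differentiableAt_of_deriv_ne_zero (norm_ne_zero_iff.1 (by simp [hv]))).hasDerivAt
  have haffine : HasDerivAt (fun s => k * (s - a)) k t := by
    simpa using ((hasDerivAt_id t).sub_const a).const_mul k
  refine ⟨σ⁻¹ • k • deriv Γ (k * (t - a)), ?_, ?_⟩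
  · refine ((hd.scomp t haffine).const_smul σ⁻¹).congr_of_eventuallyEq ?_
    filter_upwards [Icc_mem_nhds htab.1 htab.2] with s hs using hγ hs
  · rw [hγ (Ioo_subset_Icc_self htab), smul_smul σ⁻¹ k]
    exact sq_inner_smul_smul_lt (hΓ.sq_inner_deriv_lt hne hd hv) (inv_ne_zero hσ)
      (mul_ne_zero (inv_ne_zero hσ) hk.ne')

end Independence

section Unfolding

open NormedSpace (normalize norm_normalize norm_smul_normalize)

lemma lipschitzOnWith_normalize {V : Type*} [NormedAddCommGroup V] [NormedSpace ℝ V] {m : ℝ≥0}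
    (hm : 0 < m) : LipschitzOnWith (2 / m) (normalize : V → V) {x | m ≤ ‖x‖} := by
  refine LipschitzOnWith.of_dist_le_mul fun x hx y hy => ?_
  have hsplit : ‖x‖ • (normalize x - normalize y) = x - y + (‖y‖ - ‖x‖) • normalize y := by
    rw [smul_sub, sub_smul, norm_smul_normalize, norm_smul_normalize]
    abel
  have hy0 : ‖normalize y‖ = 1 := norm_normalize (norm_pos_iff.1 (lt_of_lt_of_le hm hy))
  rw [NNReal.coe_div, NNReal.coe_ofNat, div_mul_eq_mul_div,
    le_div_iff₀' (NNReal.coe_pos.2 hm)]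
  calc m * dist (normalize x) (normalize y) ≤ ‖x‖ * dist (normalize x) (normalize y) :=
        mul_le_mul_of_nonneg_right hx dist_nonneg
    _ = ‖x - y + (‖y‖ - ‖x‖) • normalize y‖ := by
        rw [← hsplit, norm_smul, norm_norm, dist_eq_norm]
    _ ≤ ‖x - y‖ + |‖y‖ - ‖x‖| * 1 := by
        rw [← hy0, ← norm_eq_abs, ← norm_smul]
        exact norm_add_le _ _
    _ ≤ 2 * dist x y := by
        rw [dist_eq_norm, mul_one, norm_sub_rev x y, two_mul]
        gcongr
        exact abs_norm_sub_norm_le y x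

lemma sq_inner_eq_of_eventually_eq_smul {V : Type*} [NormedAddCommGroup V]
    [InnerProductSpace ℝ V] {γ : ℝ → V} {p v : V} {t : ℝ} (hp : ‖p‖ = 1)
    (hγ : ∀ᶠ s in nhds t, γ s = ⟪p, γ s⟫ • p) (hd : HasDerivAt γ v t) :
    ⟪γ t, v⟫ ^ 2 = ‖γ t‖ ^ 2 * ‖v‖ ^ 2 := by
  have hv : v = ⟪p, v⟫ • p :=
    hd.unique (((hasDerivAt_const_inner hd p).smul_const p).congr_of_eventuallyEq hγ)
  rw [hγ.self_of_nhds, hv]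
  simp [inner_smul_left, inner_smul_right, norm_smul, hp, mul_pow, mul_comm]

variable {a b : ℝ} {γ : ℝ → E3} {C : ℝ≥0}

lemma sphericalArc_sub_sphericalArc {K : ℝ≥0}
    (hK : LipschitzOnWith K (fun s => normalize (γ s)) (Icc a b)) {s t : ℝ} (has : a ≤ s)
    (hst : s ≤ t) (htb : t ≤ b) : sphericalArc a γ t - sphericalArc a γ s =
      (eVariationOn (fun s => normalize (γ s)) (Icc s t)).toReal := by
  have hfin {u v : ℝ} (hau : a ≤ u) (hvb : v ≤ b) :
      eVariationOn (fun s => normalize (γ s)) (Icc u v) ≠ ⊤ :=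
    ne_top_of_le_ne_top (ENNReal.mul_ne_top ENNReal.coe_ne_top ENNReal.ofReal_ne_top)
      (eVariationOn_Icc_le_of_lipschitzOnWith (hK.mono (Icc_subset_Icc hau hvb)))
  have hadd := eVariationOn.Icc_add_Icc (fun s => normalize (γ s)) (s := univ) has hst (mem_univ s)
  simp only [univ_inter] at hadd
  exact sub_eq_of_eq_add' ((congrArg ENNReal.toReal hadd).symm.trans
    (ENNReal.toReal_add (hfin le_rfl (hst.trans htb)) (hfin has htb)))

lemma lipschitzOnWith_sphericalArc {K : ℝ≥0}
    (hK : LipschitzOnWith K (fun s => normalize (γ s)) (Icc a b)) :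
    LipschitzOnWith K (sphericalArc a γ) (Icc a b) := by
  refine LipschitzOnWith.of_dist_le_mul fun s hs t ht => ?_
  wlog hst : s ≤ t generalizing s t
  · rw [dist_comm, dist_comm s]
    exact this t ht s hs (le_of_not_ge hst)
  rw [dist_comm, dist_comm s, Real.dist_eq, sphericalArc_sub_sphericalArc hK hs.1 hst ht.2,
    abs_of_nonneg ENNReal.toReal_nonneg, Real.dist_eq, abs_of_nonneg (sub_nonneg.2 hst)]
  refine ENNReal.toReal_le_of_le_ofReal (mul_nonneg K.2 (sub_nonneg.2 hst)) ?_
  rw [ENNReal.ofReal_mul K.coe_nonneg, ENNReal.ofReal_coe_nnreal]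
  exact eVariationOn_Icc_le_of_lipschitzOnWith (hK.mono (Icc_subset_Icc hs.1 ht.2))

lemma IsMinimalInspection.exists_lipschitzOnWith_normalize (hmin : IsMinimalInspection a b γ)
    (hs : HasConstantSpeedOnWith γ (Icc a b) C) :
    ∃ K, LipschitzOnWith K (fun s => normalize (γ s)) (Icc a b) := by
  obtain ⟨t₀, ht₀, hle⟩ := isCompact_Icc.exists_isMinOn (nonempty_Icc.2 hmin.1.1.le)
    hmin.1.2.1.norm
  exact ⟨_, (lipschitzOnWith_normalize (m := ‖γ t₀‖₊)
    (nnnorm_pos.2 (hmin.apply_ne_zero hs ht₀))).comp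
      (lipschitzOnWith_of_hasConstantSpeedOnWith hs) hle⟩

lemma IsMinimalInspection.eVariationOn_normalize_ne_zero (hmin : IsMinimalInspection a b γ)
    (hs : HasConstantSpeedOnWith γ (Icc a b) C) {s t : ℝ} (has : a ≤ s) (hst : s < t)
    (htb : t ≤ b) : eVariationOn (fun s => normalize (γ s)) (Icc s t) ≠ 0 := by
  intro h0
  rw [eVariationOn.eq_zero_iff] at h0
  set p := normalize (γ s)
  have hp : ‖p‖ = 1 := norm_normalize (hmin.apply_ne_zero hs ⟨has, hst.le.trans htb⟩)
  have hγ {u : ℝ} (hu : u ∈ Icc s t) : γ u = ⟪p, γ u⟫ • p := by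
    have hpu : normalize (γ u) = p := edist_eq_zero.1 (h0 u hu s (left_mem_Icc.2 hst.le))
    have hup : γ u = ‖γ u‖ • p := by rw [← hpu, norm_smul_normalize]
    have hinner : ⟪p, γ u⟫ = ‖γ u‖ := by
      conv_lhs => rw [hup, inner_smul_right, real_inner_self_eq_norm_sq, hp, one_pow, mul_one]
    rw [hinner, ← hup]
  have hae := ae_restrict_of_ae_restrict_of_subset
    (Ioo_subset_Icc_self.trans (Icc_subset_Icc has htb)) (hmin.ae_exists_hasDerivAt_sq_inner_lt hs)
  have : (ae (volume.restrict (Ioo s t))).NeBot := ae_neBot.2 (by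
    rw [Ne, Measure.restrict_eq_zero, Real.volume_Ioo, ENNReal.ofReal_eq_zero, not_le]
    exact sub_pos.2 hst)
  obtain ⟨u, ⟨v, hv, hlt⟩, hu⟩ := (hae.and (ae_restrict_mem measurableSet_Ioo)).exists
  refine hlt.ne (sq_inner_eq_of_eventually_eq_smul hp ?_ hv)
  filter_upwards [Icc_mem_nhds hu.1 hu.2] with w hw using hγ hw

lemma IsMinimalInspection.strictMonoOn_sphericalArc (hmin : IsMinimalInspection a b γ)
    (hs : HasConstantSpeedOnWith γ (Icc a b) C) : StrictMonoOn (sphericalArc a γ) (Icc a b) := by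
  obtain ⟨K, hK⟩ := hmin.exists_lipschitzOnWith_normalize hs
  intro s hs' t ht' hst
  rw [← sub_pos, sphericalArc_sub_sphericalArc hK hs'.1 hst.le ht'.2]
  exact ENNReal.toReal_pos (hmin.eVariationOn_normalize_ne_zero hs hs'.1 hst ht'.2)
    (ne_top_of_le_ne_top (ENNReal.mul_ne_top ENNReal.coe_ne_top ENNReal.ofReal_ne_top)
      (eVariationOn_Icc_le_of_lipschitzOnWith (hK.mono (Icc_subset_Icc hs'.1 ht'.2))))

lemma inner_unfolding (a : ℝ) (γ : ℝ → E3) (s t : ℝ) : ⟪unfolding a γ s, unfolding a γ t⟫ =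
    ‖γ s‖ * ‖γ t‖ * cos (sphericalArc a γ s - sphericalArc a γ t) := by
  rw [unfolding, unfolding, inner_smul_left, inner_smul_right, conj_trivial, cos_sub]
  simp only [PiLp.inner_apply, Fin.sum_univ_two, WithLp.equiv_symm_apply, RCLike.inner_apply,
    conj_trivial, Matrix.cons_val_zero, Matrix.cons_val_one]
  ring

lemma norm_unfolding (a : ℝ) (γ : ℝ → E3) (t : ℝ) : ‖unfolding a γ t‖ = ‖γ t‖ := by
  rw [← sq_eq_sq₀ (norm_nonneg _) (norm_nonneg _), ← real_inner_self_eq_norm_sq, inner_unfolding,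
    sub_self, cos_zero, mul_one, sq]

lemma sphericalArc_eq_of_unfolding_eq {s t : ℝ} (hs : γ s ≠ 0)
    (h : unfolding a γ s = unfolding a γ t)
    (hlt : |sphericalArc a γ s - sphericalArc a γ t| < 2 * π) :
    sphericalArc a γ s = sphericalArc a γ t := by
  have hnorm : ‖γ t‖ = ‖γ s‖ := by rw [← norm_unfolding a, ← norm_unfolding a, h]
  have hinner := inner_unfolding a γ s t
  rw [← h, real_inner_self_eq_norm_sq, norm_unfolding, hnorm, ← sq,
    eq_comm, mul_eq_left₀ (pow_ne_zero 2 (norm_ne_zero_iff.2 hs))] at hinner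
  obtain ⟨hneg, hpos⟩ := abs_lt.1 hlt
  exact sub_eq_zero.1 ((cos_eq_one_iff_of_lt_of_lt hneg hpos).1 hinner)

lemma injOn_unfolding {S : Set ℝ} (hne : ∀ t ∈ S, γ t ≠ 0) (hinj : InjOn (sphericalArc a γ) S)
    (hlt : ∀ s ∈ S, ∀ t ∈ S, |sphericalArc a γ s - sphericalArc a γ t| < 2 * π) :
    InjOn (unfolding a γ) S := fun s hs t ht h =>
  hinj hs ht (sphericalArc_eq_of_unfolding_eq (hne s hs) h (hlt s hs t ht))

end Unfolding

/-- For a constant speed minimal inspection curve, almost everywhere the position and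
velocity vectors are linearly independent; consequently the spherical arclength function
is strictly increasing and the unfolding is locally one-to-one. -/
theorem minimal_inspection_unfolding_locally_injective
    (a b : ℝ) (γ : ℝ → E3) (C : ℝ≥0)
    (hmin : IsMinimalInspection a b γ)
    (hspeed : HasConstantSpeedOnWith γ (Set.Icc a b) C) :
    (∀ᵐ t ∂(volume.restrict (Set.Icc a b)), ∀ v : E3,
      HasDerivWithinAt γ v (Set.Icc a b) t →
        ⟪γ t, v⟫ ^ 2 < ‖γ t‖ ^ 2 * ‖v‖ ^ 2) ∧
    StrictMonoOn (sphericalArc a γ) (Set.Icc a b) ∧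
    (∀ t ∈ Set.Icc a b, ∃ U ∈ nhdsWithin t (Set.Icc a b),
      Set.InjOn (unfolding a γ) U) := by
  have hmono := hmin.strictMonoOn_sphericalArc hspeed
  obtain ⟨K, hK⟩ := hmin.exists_lipschitzOnWith_normalize hspeed
  have hcont := (lipschitzOnWith_sphericalArc hK).continuousOn
  refine ⟨?_, hmono, fun t ht => ?_⟩
  · filter_upwards [hmin.ae_exists_hasDerivAt_sq_inner_lt hspeed, ae_restrict_mem measurableSet_Icc]
      with t ⟨w, hw, hlt⟩ ht v hv
    rwa [(uniqueDiffOn_Icc hmin.1.1 t ht).eq_deriv _ hv hw.hasDerivWithinAt]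
  · refine ⟨_, Filter.inter_mem self_mem_nhdsWithin
      (hcont t ht (Metric.ball_mem_nhds _ pi_pos)), injOn_unfolding
        (fun s hs => hmin.apply_ne_zero hspeed hs.1) (hmono.injOn.mono inter_subset_left)
        fun s hs u hu => ?_⟩
    rw [← Real.dist_eq, two_mul]
    exact (dist_triangle_right _ _ (sphericalArc a γ t)).trans_lt (add_lt_add hs.2 hu.2)
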